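/- Let A be a basic indecomposable artin algebra and Γ a finite cyclic component of the Auslander–Reiten quiver Γ_A. Then Γ contains an indecomposable projective module and an indecomposable injective module. -/

import Mathlib

/-!
Common framework: finite length modules over a ring, the radical of the module
category, cycles of indecomposable modules, Auslander-Reiten quivers,
translation quivers notions, and classes of artin algebras.
Right `A`-modules are formalized as left `Aᵐᵒᵖ`-modules.
-/

universe u

/-- A bundled object of `mod R`: a finite length `R`-module. -/
structure ModA (R : Type u) [Ring R] : Type (u + 1) where
  M : Type u
  [acg : AddCommGroup M]
  [mod : Module R M]
  finLen : IsFiniteLength R M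

attribute [instance] ModA.acg ModA.mod

/-- A bundled (not necessarily finite length) `R`-module. -/
structure RawMod (R : Type u) [Ring R] : Type (u + 1) where
  M : Type u
  [acg : AddCommGroup M]
  [mod : Module R M]

attribute [instance] RawMod.acg RawMod.mod

/-- A module is indecomposable iff it is nonzero and its endomorphism ring has no
nontrivial idempotents. -/
def IsIndecMod (R : Type u) [Ring R] (M : Type u) [AddCommGroup M] [Module R M] : Prop :=
  Nontrivial M ∧ ∀ f : Module.End R M, f * f = f → f = 0 ∨ f = 1

namespace ModA

variable {R : Type u} [Ring R]

/-- Indecomposability of an object of `mod R`. -/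
def IsIndec (X : ModA R) : Prop := IsIndecMod R X.M

/-- Isomorphism of objects of `mod R`. -/
def Iso (X Y : ModA R) : Prop := Nonempty (X.M ≃ₗ[R] Y.M)

end ModA

/-- Membership in the radical `rad(X, Y)` of the category `mod R`: a map `f : X → Y`
belongs to the radical iff for every indecomposable `Z` and all `g : Z → X`, `h : Y → Z`
the composite `h ∘ f ∘ g` is not an isomorphism. -/
def InRad {R : Type u} [Ring R] {X Y : ModA R} (f : X.M →ₗ[R] Y.M) : Prop :=
  ∀ Z : ModA R, Z.IsIndec → ∀ (g : Z.M →ₗ[R] X.M) (h : Y.M →ₗ[R] Z.M),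
    ¬Function.Bijective (h.comp (f.comp g))

/-- The powers `rad^n` of the radical of `mod R`. -/
def radPow (R : Type u) [Ring R] : ℕ → ∀ X Y : ModA R, AddSubgroup (X.M →ₗ[R] Y.M)
  | 0, _, _ => ⊤
  | n + 1, X, Y => AddSubgroup.closure
      {f | ∃ (Z : ModA R) (g : X.M →ₗ[R] Z.M) (h : Z.M →ₗ[R] Y.M),
        InRad g ∧ h ∈ radPow R n Z Y ∧ f = h.comp g}

/-- Membership in the infinite radical `rad^∞ = ⋂ₙ radⁿ` of `mod R`. -/
def InRadInf {R : Type u} [Ring R] {X Y : ModA R} (f : X.M →ₗ[R] Y.M) : Prop :=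
  ∀ n : ℕ, f ∈ radPow R n X Y

/-- A cycle in `ind R`: a sequence of nonzero nonisomorphisms
`M₀ → M₁ → ⋯ → M_{r-1} → M_r = M₀` between indecomposable modules. -/
structure ModCycle (R : Type u) [Ring R] : Type (u + 1) where
  len : ℕ
  len_pos : 0 < len
  obj : Fin (len + 1) → ModA R
  obj_indec : ∀ i, (obj i).IsIndec
  closed : obj (Fin.last len) = obj 0
  hom : ∀ i : Fin len, (obj i.castSucc).M →ₗ[R] (obj i.succ).M
  hom_ne_zero : ∀ i, hom i ≠ 0
  hom_not_iso : ∀ i, ¬Function.Bijective (hom i)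

/-- A cycle is finite if none of its homomorphisms lies in the infinite radical. -/
def ModCycle.IsFiniteCycle {R : Type u} [Ring R] (c : ModCycle R) : Prop :=
  ∀ i, ¬InRadInf (c.hom i)

/-- The cycle passes through the module `M`. -/
def ModCycle.Passes {R : Type u} [Ring R] (c : ModCycle R) (M : ModA R) : Prop :=
  ∃ i, (c.obj i).Iso M

/-- A module is cycle-finite if it lies on a cycle and every cycle through it is finite. -/
def IsCycleFiniteModule {R : Type u} [Ring R] (M : ModA R) : Prop :=
  (∃ c : ModCycle R, c.Passes M) ∧ ∀ c : ModCycle R, c.Passes M → c.IsFiniteCycle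

/-- A module is directing if it lies on no cycle. -/
def IsDirectingModule {R : Type u} [Ring R] (M : ModA R) : Prop :=
  ¬∃ c : ModCycle R, c.Passes M

section Irreducible

variable {R : Type u} [Ring R]

/-- `f` is a split monomorphism (a section). -/
def SplitMonoMap {X Y : ModA R} (f : X.M →ₗ[R] Y.M) : Prop :=
  ∃ r : Y.M →ₗ[R] X.M, r.comp f = LinearMap.id

/-- `f` is a split epimorphism (a retraction). -/
def SplitEpiMap {X Y : ModA R} (f : X.M →ₗ[R] Y.M) : Prop :=
  ∃ s : Y.M →ₗ[R] X.M, f.comp s = LinearMap.id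

/-- `f` is an irreducible homomorphism. -/
def IsIrred {X Y : ModA R} (f : X.M →ₗ[R] Y.M) : Prop :=
  ¬SplitMonoMap f ∧ ¬SplitEpiMap f ∧
    ∀ (Z : ModA R) (g : X.M →ₗ[R] Z.M) (h : Z.M →ₗ[R] Y.M), h.comp g = f →
      SplitMonoMap g ∨ SplitEpiMap h

end Irreducible

/-- An almost split (Auslander-Reiten) sequence `0 → l → m → r → 0` in `mod R`. -/
structure AlmostSplitSeq (R : Type u) [Ring R] : Type (u + 1) where
  l : ModA R
  m : ModA R
  r : ModA R
  f : l.M →ₗ[R] m.M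
  g : m.M →ₗ[R] r.M
  inj : Function.Injective f
  surj : Function.Surjective g
  exact : LinearMap.range f = LinearMap.ker g
  not_split : ¬SplitEpiMap g
  l_indec : l.IsIndec
  r_indec : r.IsIndec
  right_almost : ∀ (Z : ModA R) (h : Z.M →ₗ[R] r.M), ¬SplitEpiMap h →
      ∃ h' : Z.M →ₗ[R] m.M, g.comp h' = h
  left_almost : ∀ (Z : ModA R) (h : l.M →ₗ[R] Z.M), ¬SplitMonoMap h →
      ∃ h' : m.M →ₗ[R] Z.M, h'.comp f = h

/-- `N ≅ τ M` for the Auslander-Reiten translation `τ = DTr`. -/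
def IsTauOf {R : Type u} [Ring R] (N M : ModA R) : Prop :=
  ∃ s : AlmostSplitSeq R, s.l.Iso N ∧ s.r.Iso M

/-- The indecomposable objects of `mod R`. -/
def IndecModA (R : Type u) [Ring R] := {X : ModA R // X.IsIndec}

/-- Isomorphism is an equivalence relation on indecomposable modules. -/
def isoSetoid (R : Type u) [Ring R] : Setoid (IndecModA R) where
  r X Y := X.1.Iso Y.1
  iseqv :=
    { refl := fun X => ⟨LinearEquiv.refl R X.1.M⟩
      symm := fun h => h.elim fun e => ⟨e.symm⟩
      trans := fun h h' => h.elim fun e => h'.elim fun e' => ⟨e.trans e'⟩ }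

/-- The vertices of the Auslander-Reiten quiver `Γ_R`: isomorphism classes of
indecomposable modules in `mod R`. -/
def ARVertex (R : Type u) [Ring R] := Quotient (isoSetoid R)

/-- The vertex of `Γ_R` given by an indecomposable module. -/
def ARVertex.mk {R : Type u} [Ring R] (X : IndecModA R) : ARVertex R :=
  Quotient.mk (isoSetoid R) X

section ARQuiver

variable {R : Type u} [Ring R]

/-- The arrows of the Auslander-Reiten quiver: `x → y` iff there is an irreducible
homomorphism between representatives. -/
def ARArrow (x y : ARVertex R) : Prop :=
  ∃ (X Y : IndecModA R) (f : X.1.M →ₗ[R] Y.1.M),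
    IsIrred f ∧ ARVertex.mk X = x ∧ ARVertex.mk Y = y

/-- `TauRel x y` iff `x = τ y` in the Auslander-Reiten quiver. -/
def TauRel (x y : ARVertex R) : Prop :=
  ∃ X Y : IndecModA R, ARVertex.mk X = x ∧ ARVertex.mk Y = y ∧ IsTauOf X.1 Y.1

/-- A vertex given by an (indecomposable) projective module. -/
def IsProjVertex (x : ARVertex R) : Prop :=
  ∃ X : IndecModA R, ARVertex.mk X = x ∧ Module.Projective R X.1.M

/-- A vertex given by an (indecomposable) injective module. -/
def IsInjVertex (x : ARVertex R) : Prop :=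
  ∃ X : IndecModA R, ARVertex.mk X = x ∧ Module.Injective R X.1.M

/-- The vertex lies on an oriented cycle of `Γ_R`. -/
def OnARCycle (x : ARVertex R) : Prop := Relation.TransGen ARArrow x x

/-- An edge (arrow in either direction) of the underlying graph of `Γ_R`. -/
def ARStep (x y : ARVertex R) : Prop := ARArrow x y ∨ ARArrow y x

/-- `D` is a connected component of the full subquiver of `Γ_R` on the vertex set `S`. -/
def IsComponentOf (S D : Set (ARVertex R)) : Prop :=
  D ⊆ S ∧ D.Nonempty ∧
    (∀ x ∈ D, ∀ y ∈ S, ARStep x y → y ∈ D) ∧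
    ∀ x ∈ D, ∀ y ∈ D, Relation.ReflTransGen (fun a b => a ∈ S ∧ b ∈ S ∧ ARStep a b) x y

/-- `C` is a connected component of `Γ_R`. -/
def IsARComponent (C : Set (ARVertex R)) : Prop := IsComponentOf Set.univ C

/-- The vertex lies on an oriented cycle all of whose vertices belong to `S`. -/
def OnCycleIn (S : Set (ARVertex R)) (x : ARVertex R) : Prop :=
  Relation.TransGen (fun a b => a ∈ S ∧ b ∈ S ∧ ARArrow a b) x x

/-- `Γ` is a connected component of the cyclic quiver `_cΓ_R` (a cyclic component). -/
def IsCyclicComponent (Γ : Set (ARVertex R)) : Prop :=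
  IsComponentOf {x | OnARCycle x} Γ

/-- A vertex represented by a cycle-finite module. -/
def IsCycleFiniteVertex (x : ARVertex R) : Prop :=
  ∃ X : IndecModA R, ARVertex.mk X = x ∧ IsCycleFiniteModule X.1

/-- A vertex represented by a directing module. -/
def IsDirectingVertex (x : ARVertex R) : Prop :=
  ∃ X : IndecModA R, ARVertex.mk X = x ∧ IsDirectingModule X.1

/-- A cycle-finite cyclic component: a cyclic component containing a cycle-finite module. -/
def IsCycleFiniteCyclicComponent (Γ : Set (ARVertex R)) : Prop :=
  IsCyclicComponent Γ ∧ ∃ x ∈ Γ, IsCycleFiniteVertex x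

/-- A full translation subquiver is cyclic if each of its vertices lies on an oriented
cycle inside it. -/
def IsCyclicSub (S : Set (ARVertex R)) : Prop := ∀ x ∈ S, OnCycleIn S x

/-- A full translation subquiver is coherent: every projective vertex is the start of an
infinite sectional path inside it, and every injective vertex is the end of an infinite
sectional path inside it. -/
def IsCoherentSub (S : Set (ARVertex R)) : Prop :=
  (∀ x ∈ S, IsProjVertex x → ∃ c : ℕ → ARVertex R, c 0 = x ∧ (∀ n, c n ∈ S) ∧
      (∀ n, ARArrow (c n) (c (n + 1))) ∧ ∀ n, ¬TauRel (c n) (c (n + 2))) ∧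
  (∀ x ∈ S, IsInjVertex x → ∃ c : ℕ → ARVertex R, c 0 = x ∧ (∀ n, c n ∈ S) ∧
      (∀ n, ARArrow (c (n + 1)) (c n)) ∧ ∀ n, ¬TauRel (c (n + 2)) (c n))

/-- `S` is a convex subquiver of (the full subquiver on) `C`: every path in `C` with
source and target in `S` has all its vertices in `S`. -/
def ConvexIn (C S : Set (ARVertex R)) : Prop :=
  ∀ (n : ℕ) (c : ℕ → ARVertex R), (∀ k ≤ n, c k ∈ C) →
    (∀ k < n, ARArrow (c k) (c (k + 1))) → c 0 ∈ S → c n ∈ S → ∀ k ≤ n, c k ∈ S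

/-- `S` is the core of the almost acyclic component `C`: the finite convex subquiver of
`C` containing all vertices lying on oriented cycles in `C`. -/
def IsCoreOf (C S : Set (ARVertex R)) : Prop :=
  S ⊆ C ∧ S.Finite ∧ ConvexIn C S ∧ ∀ x ∈ C, OnCycleIn C x → x ∈ S

/-- A component is almost acyclic if all but finitely many of its vertices do not lie on
oriented cycles. -/
def IsAlmostAcyclicComp (C : Set (ARVertex R)) : Prop := {x ∈ C | OnCycleIn C x}.Finite

/-- A component is almost cyclic if its cyclic part is cofinite. -/
def IsAlmostCyclicComp (C : Set (ARVertex R)) : Prop := {x ∈ C | ¬OnCycleIn C x}.Finite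

/-- Two vertices lie in the same `τ`-orbit. -/
def TauConn (x y : ARVertex R) : Prop :=
  Relation.ReflTransGen (fun a b => TauRel a b ∨ TauRel b a) x y

/-- The left stable part of `C`: remove the `τ`-orbits of projective vertices. -/
def leftStable (C : Set (ARVertex R)) : Set (ARVertex R) :=
  {x | x ∈ C ∧ ¬∃ y, TauConn x y ∧ IsProjVertex y}

/-- The right stable part of `C`: remove the `τ`-orbits of injective vertices. -/
def rightStable (C : Set (ARVertex R)) : Set (ARVertex R) :=
  {x | x ∈ C ∧ ¬∃ y, TauConn x y ∧ IsInjVertex y}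

/-- The stable part of `C`. -/
def stablePart (C : Set (ARVertex R)) : Set (ARVertex R) := leftStable C ∩ rightStable C

end ARQuiver

/-- The arrows of the translation quiver `ℤA∞/(τ^r)`, with vertices indexed by the
`τ`-orbit coordinate in `ZMod r` and the quasi-length (minus one) in `ℕ`. -/
def TubeArrow {r : ℕ} : ZMod r × ℕ → ZMod r × ℕ → Prop := fun u v =>
  (v.1 = u.1 ∧ v.2 = u.2 + 1) ∨ (v.1 = u.1 + 1 ∧ u.2 = v.2 + 1)

section Tube

variable {R : Type u} [Ring R]

/-- `T` is a stable tube of rank `r`, parametrized by `φ : ℤA∞/(τ^r) → Γ_R`. -/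
def IsStableTubeVia (T : Set (ARVertex R)) (r : ℕ) (φ : ZMod r × ℕ → ARVertex R) : Prop :=
  0 < r ∧ Function.Injective φ ∧ Set.range φ = T ∧
    (∀ u v, TubeArrow u v → ARArrow (φ u) (φ v)) ∧
    (∀ u v, ARArrow (φ u) (φ v) → TubeArrow u v) ∧
    ∀ (i : ZMod r) (n : ℕ), TauRel (φ (i - 1, n)) (φ (i, n))

/-- `T` is a stable tube. -/
def IsStableTube (T : Set (ARVertex R)) : Prop := ∃ r φ, IsStableTubeVia T r φ

end Tube

section Separating

variable {R : Type u} [Ring R]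

/-- A family of vertices is generalized standard if `rad^∞` vanishes between its modules. -/
def GeneralizedStandardSet (U : Set (ARVertex R)) : Prop :=
  ∀ X Y : IndecModA R, ARVertex.mk X ∈ U → ARVertex.mk Y ∈ U →
    ∀ f : X.1.M →ₗ[R] Y.1.M, InRadInf f → f = 0

/-- `S` is (isomorphic to) a composition factor (a subquotient) of `M`. -/
def IsCompFactorMod (R : Type u) [Ring R] (S : Type u) [AddCommGroup S] [Module R S]
    (M : Type u) [AddCommGroup M] [Module R M] : Prop :=
  ∃ N' N : Submodule R M, N' ≤ N ∧
    Nonempty ((↥N ⧸ N'.comap N.subtype) ≃ₗ[R] S)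

/-- A family of vertices is sincere if every simple module is a composition factor of one
of its modules. -/
def SincereSet (U : Set (ARVertex R)) : Prop :=
  ∀ (S : Type u) [AddCommGroup S] [Module R S], IsSimpleModule R S →
    ∃ x ∈ U, ∃ X : IndecModA R, ARVertex.mk X = x ∧ IsCompFactorMod R S X.1.M

/-- All homomorphisms from modules with vertex in `U` to modules with vertex in `V` vanish. -/
def HomVanish (U V : Set (ARVertex R)) : Prop :=
  ∀ X Y : IndecModA R, ARVertex.mk X ∈ U → ARVertex.mk Y ∈ V →
    ∀ f : X.1.M →ₗ[R] Y.1.M, f = 0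

/-- Every homomorphism from a module in `U` to a module in `V` factors through the
additive closure of the modules in `W`. -/
def FactorsThrough (U W V : Set (ARVertex R)) : Prop :=
  ∀ X Y : IndecModA R, ARVertex.mk X ∈ U → ARVertex.mk Y ∈ V →
    ∀ f : X.1.M →ₗ[R] Y.1.M, ∃ (k : ℕ) (Z : Fin k → IndecModA R)
      (g : ∀ i, X.1.M →ₗ[R] (Z i).1.M) (h : ∀ i, (Z i).1.M →ₗ[R] Y.1.M),
      (∀ i, ARVertex.mk (Z i) ∈ W) ∧ f = ∑ i, (h i).comp (g i)

/-- `cs` is a separating family of components of `Γ_R`. -/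
def IsSeparatingFamily (cs : Set (Set (ARVertex R))) : Prop :=
  ∃ ps qs : Set (Set (ARVertex R)),
    (∀ C ∈ ps, IsARComponent C) ∧ (∀ C ∈ cs, IsARComponent C) ∧ (∀ C ∈ qs, IsARComponent C) ∧
    (∀ C, IsARComponent C → C ∈ ps ∨ C ∈ cs ∨ C ∈ qs) ∧
    (∀ C ∈ ps, C ∉ cs ∧ C ∉ qs) ∧ (∀ C ∈ cs, C ∉ qs) ∧
    SincereSet (⋃₀ cs) ∧ GeneralizedStandardSet (⋃₀ cs) ∧
    HomVanish (⋃₀ qs) (⋃₀ ps) ∧ HomVanish (⋃₀ qs) (⋃₀ cs) ∧ HomVanish (⋃₀ cs) (⋃₀ ps) ∧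
    FactorsThrough (⋃₀ ps) (⋃₀ cs) (⋃₀ qs)

end Separating

/-! ### Classes of algebras via their Auslander-Reiten quivers.
For a ring `B`, the category `mod B` of finitely generated right `B`-modules is
realized as the category of finite length left `Bᵐᵒᵖ`-modules. -/

/-- An algebra is of finite representation type if it has only finitely many isomorphism
classes of indecomposable finitely generated (right) modules. -/
def IsFiniteRepTypeAlg (B : Type u) [Ring B] : Prop :=
  (Set.univ : Set (ARVertex Bᵐᵒᵖ)).Finite

/-- An algebra is cycle-finite if all cycles in `ind B` are finite. -/
def IsCycleFiniteAlg (B : Type u) [Ring B] : Prop :=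
  ∀ c : ModCycle Bᵐᵒᵖ, c.IsFiniteCycle

/-- A generalized multicoil algebra: an algebra whose Auslander-Reiten quiver admits a
separating family of almost cyclic coherent components. -/
def IsGeneralizedMulticoilAlgebra (B : Type u) [Ring B] : Prop :=
  ∃ cs : Set (Set (ARVertex Bᵐᵒᵖ)),
    (∀ C ∈ cs, IsARComponent C ∧ IsAlmostCyclicComp C ∧ IsCoherentSub C) ∧
    IsSeparatingFamily cs

/-- A generalized double tilted algebra: an algebra whose Auslander-Reiten quiver admits
a separating almost acyclic component (a connecting component). -/
def IsGeneralizedDoubleTiltedAlgebra (B : Type u) [Ring B] : Prop :=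
  ∃ C : Set (ARVertex Bᵐᵒᵖ),
    IsARComponent C ∧ IsAlmostAcyclicComp C ∧ IsSeparatingFamily {C}

/-- A concealed canonical algebra: an algebra whose Auslander-Reiten quiver admits a
separating family of stable tubes. -/
def IsConcealedCanonicalAlgebra (B : Type u) [Ring B] : Prop :=
  ∃ ts : Set (Set (ARVertex Bᵐᵒᵖ)), (∀ T ∈ ts, IsStableTube T) ∧ IsSeparatingFamily ts

/-- A generic module: an indecomposable module of infinite length with finite endolength. -/
def IsGenericModule (R : Type u) [Ring R] (N : RawMod R) : Prop :=
  IsIndecMod R N.M ∧ ¬IsFiniteLength R N.M ∧ IsFiniteLength (Module.End R N.M) N.M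

/-- The endolength of a module: its length over its endomorphism ring. -/
noncomputable def endolength (R : Type u) [Ring R] (N : RawMod R) : WithBot ℕ∞ :=
  Order.krullDim (Submodule (Module.End R N.M) N.M)

/-- Generic tameness in the sense of Crawley-Boevey: for each `d` there are only finitely
many isomorphism classes of generic (right) modules of endolength `d`. -/
def IsGenericallyTameAlg (B : Type u) [Ring B] : Prop :=
  ∀ d : ℕ, ∃ (k : ℕ) (T : Fin k → RawMod Bᵐᵒᵖ),
    ∀ N : RawMod Bᵐᵒᵖ, IsGenericModule Bᵐᵒᵖ N → endolength Bᵐᵒᵖ N = (d : ℕ∞) →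
      ∃ i, Nonempty (N.M ≃ₗ[Bᵐᵒᵖ] (T i).M)

/-- A tame generalized multicoil algebra. -/
def IsTameGeneralizedMulticoilAlgebra (B : Type u) [Ring B] : Prop :=
  IsGeneralizedMulticoilAlgebra B ∧ IsGenericallyTameAlg B

/-- A tame generalized double tilted algebra. -/
def IsTameGeneralizedDoubleTiltedAlgebra (B : Type u) [Ring B] : Prop :=
  IsGeneralizedDoubleTiltedAlgebra B ∧ IsGenericallyTameAlg B

/-! ### The quiver of an algebra, convex idempotents, basic and connected algebras -/

section AlgebraSide

variable (A : Type u) [Ring A]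

/-- The Jacobson radical of `A` (as a left ideal; it is in fact two-sided). -/
def jacobsonRad : Ideal A := (⊥ : Ideal A).jacobson

/-- The square of the Jacobson radical of `A`. -/
def jacobsonRadSq : Ideal A :=
  Ideal.span {x | ∃ a ∈ jacobsonRad A, ∃ b ∈ jacobsonRad A, x = a * b}

/-- A primitive idempotent of `A`. -/
def IsPrimitiveIdempotent (e : A) : Prop :=
  IsIdempotentElem e ∧ e ≠ 0 ∧
    ∀ f g : A, IsIdempotentElem f → IsIdempotentElem g → f * g = 0 → g * f = 0 →
      e = f + g → f = 0 ∨ g = 0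

/-- A complete family of pairwise orthogonal primitive idempotents of `A`; its indices
are the vertices of the quiver `Q_A` of `A`. -/
structure CompleteIdemFamily (A : Type u) [Ring A] where
  n : ℕ
  e : Fin n → A
  prim : ∀ i, IsPrimitiveIdempotent A (e i)
  orth : ∀ i j, i ≠ j → e i * e j = 0
  total : ∑ i, e i = 1

/-- There is an arrow `i → j` in the quiver `Q_A` iff `e_i (rad A) e_j ⊄ (rad A)²`. -/
def QAarrow (E : CompleteIdemFamily A) (i j : Fin E.n) : Prop :=
  ∃ y ∈ jacobsonRad A, E.e i * y * E.e j ∉ jacobsonRadSq A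

/-- A set of vertices of `Q_A` is convex if every path of `Q_A` with source and target in
it has all its vertices in it. -/
def ConvexVertexSet (E : CompleteIdemFamily A) (S : Set (Fin E.n)) : Prop :=
  ∀ (n : ℕ) (c : ℕ → Fin E.n), (∀ k < n, QAarrow A E (c k) (c (k + 1))) →
    c 0 ∈ S → c n ∈ S → ∀ k ≤ n, c k ∈ S

/-- A convex idempotent of `A`: a sum of pairwise orthogonal primitive idempotents
corresponding to the vertices of a convex subquiver of `Q_A`. -/
def IsConvexIdempotent (e : A) : Prop :=
  ∃ (E : CompleteIdemFamily A) (S : Finset (Fin E.n)),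
    ConvexVertexSet A E ↑S ∧ e = ∑ i ∈ S, E.e i

/-- The corner `eAe` of `A` at an idempotent `e`, as a nonunital subring (it is a unital
ring with unit `e`). -/
def cornerRing (e : A) : NonUnitalSubring A where
  carrier := {x | e * x = x ∧ x * e = x}
  zero_mem' := by simp
  add_mem' := by
    rintro a b ⟨ha1, ha2⟩ ⟨hb1, hb2⟩
    constructor
    · rw [mul_add, ha1, hb1]
    · rw [add_mul, ha2, hb2]
  neg_mem' := by
    rintro a ⟨ha1, ha2⟩
    constructor
    · rw [mul_neg, ha1]
    · rw [neg_mul, ha2]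
  mul_mem' := by
    rintro a b ⟨ha1, ha2⟩ ⟨hb1, hb2⟩
    constructor
    · rw [← mul_assoc, ha1]
    · rw [mul_assoc, hb2]

/-- An (indecomposable =) connected algebra: no nontrivial central idempotents. -/
def IsConnectedAlgebra : Prop :=
  Nontrivial A ∧ ∀ e : A, IsIdempotentElem e → e ∈ Set.center A → e = 0 ∨ e = 1

/-- A basic algebra: distinct orthogonal primitive idempotents have nonisomorphic
associated indecomposable projective right modules. -/
def IsBasicAlgebra : Prop :=
  ¬∃ e f : A, IsPrimitiveIdempotent A e ∧ IsPrimitiveIdempotent A f ∧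
    e * f = 0 ∧ f * e = 0 ∧
    Nonempty ((Submodule.span Aᵐᵒᵖ {e} : Submodule Aᵐᵒᵖ A) ≃ₗ[Aᵐᵒᵖ]
      (Submodule.span Aᵐᵒᵖ {f} : Submodule Aᵐᵒᵖ A))

end AlgebraSide

/-! ### Support algebras and faithful algebras of families of vertices -/

section Support

variable (A : Type u) [Ring A]

/-- The radical of a module: the intersection of its maximal submodules. -/
def modRadical (R : Type u) [Ring R] (M : Type u) [AddCommGroup M] [Module R M] :
    Submodule R M :=
  sInf {N | IsCoatom N}

/-- The intersection `ann_A(Γ)` of the annihilators of all right `A`-modules whose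
vertices belong to `Γ`, as a two-sided ideal of `A`. -/
def annTwoSidedIdeal (Γ : Set (ARVertex Aᵐᵒᵖ)) : TwoSidedIdeal A :=
  TwoSidedIdeal.mk'
    {a | ∀ x ∈ Γ, ∀ X : IndecModA Aᵐᵒᵖ, ARVertex.mk X = x →
      ∀ m : X.1.M, MulOpposite.op a • m = 0}
    (by intro x _ X _ m; simp)
    (by
      intro a b ha hb x hx X hX m
      have : MulOpposite.op (a + b) • m = MulOpposite.op a • m + MulOpposite.op b • m := by
        rw [← add_smul]; rfl
      rw [this, ha x hx X hX m, hb x hx X hX m, add_zero])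
    (by
      intro a ha x hx X hX m
      have : MulOpposite.op (-a) • m = -(MulOpposite.op a • m) := by
        rw [← neg_smul]; rfl
      rw [this, ha x hx X hX m, neg_zero])
    (by
      intro a b hb x hx X hX m
      have : MulOpposite.op (a * b) • m = MulOpposite.op b • (MulOpposite.op a • m) := by
        rw [← mul_smul]; rfl
      rw [this, hb x hx X hX _])
    (by
      intro a b ha x hx X hX m
      have : MulOpposite.op (a * b) • m = MulOpposite.op b • (MulOpposite.op a • m) := by
        rw [← mul_smul]; rfl
      rw [this, ha x hx X hX m, smul_zero])

/-- The faithful algebra `B(Γ) = A / ann_A(Γ)` of a family `Γ` of vertices of `Γ_A`. -/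
abbrev faithfulAlg (Γ : Set (ARVertex Aᵐᵒᵖ)) : Type u :=
  (annTwoSidedIdeal A Γ).ringCon.Quotient

/-- The canonical projection `A → B(Γ)`. -/
def faithfulProj (Γ : Set (ARVertex Aᵐᵒᵖ)) : A →+* faithfulAlg A Γ :=
  RingCon.mk' (annTwoSidedIdeal A Γ).ringCon

/-- The trace ideal `t_A(Γ)`: the two-sided ideal of `A` generated by the images of all
homomorphisms of right `A`-modules from `Q` to `A`. -/
def traceIdeal (Q : Submodule Aᵐᵒᵖ A) : TwoSidedIdeal A :=
  TwoSidedIdeal.span (⋃ f : ↥Q →ₗ[Aᵐᵒᵖ] A, Set.range f)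

/-- A decomposition `A = P_Γ ⊕ Q_Γ` of `A` in `mod A` such that the simple summands of
`P_Γ / rad P_Γ` are exactly the simple composition factors of the modules in `Γ`. -/
structure GammaDecomp (A : Type u) [Ring A] (Γ : Set (ARVertex Aᵐᵒᵖ)) where
  P : Submodule Aᵐᵒᵖ A
  Q : Submodule Aᵐᵒᵖ A
  compl : IsCompl P Q
  top_factors : ∀ (S : Type u) [AddCommGroup S] [Module Aᵐᵒᵖ S], IsSimpleModule Aᵐᵒᵖ S →
    (IsCompFactorMod Aᵐᵒᵖ S (↥P ⧸ modRadical Aᵐᵒᵖ ↥P) ↔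
      ∃ x ∈ Γ, ∃ X : IndecModA Aᵐᵒᵖ, ARVertex.mk X = x ∧ IsCompFactorMod Aᵐᵒᵖ S X.1.M)

end Support

/-- Restriction of scalars along a surjective ring homomorphism `π : A → B` identifies a
vertex `y` of `Γ_B` with a vertex `x` of `Γ_A`: representatives have the same underlying
group, with the `A`-action obtained from the `B`-action through `π`. -/
def VertexRestrictsTo {A B : Type u} [Ring A] [Ring B] (π : A →+* B)
    (y : ARVertex Bᵐᵒᵖ) (x : ARVertex Aᵐᵒᵖ) : Prop :=
  ∃ (N : IndecModA Bᵐᵒᵖ) (X : IndecModA Aᵐᵒᵖ), ARVertex.mk N = y ∧ ARVertex.mk X = x ∧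
    ∃ e : X.1.M ≃+ N.1.M, ∀ (a : A) (m : X.1.M),
      e (MulOpposite.op a • m) = MulOpposite.op (π a) • e m

/-! ### `K`-module structures on Hom-groups, lengths, and Ext -/

section KLength

variable (K B : Type u) [CommRing K] [Ring B] [Algebra K B]
variable (X N : Type u) [AddCommGroup X] [Module B X] [AddCommGroup N] [Module B N]

/-- The action of `K` on `B`-linear maps, through `algebraMap K B`. -/
def homKSMul (k : K) (f : X →ₗ[B] N) : X →ₗ[B] N where
  toFun x := algebraMap K B k • f x
  map_add' x y := by show algebraMap K B k • f (x + y) = _; rw [map_add, smul_add]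
  map_smul' b x := by
    simp only [map_smul, RingHom.id_apply, smul_smul]
    rw [Algebra.commutes]

/-- The `K`-module structure on the group of `B`-linear maps. -/
def homKModule : Module K (X →ₗ[B] N) where
  smul := homKSMul K B X N
  one_smul f := LinearMap.ext fun x => by
    show algebraMap K B 1 • f x = f x
    rw [map_one, one_smul]
  mul_smul k l f := LinearMap.ext fun x => by
    show algebraMap K B (k * l) • f x = algebraMap K B k • algebraMap K B l • f x
    rw [map_mul, mul_smul]
  smul_zero k := LinearMap.ext fun x => by
    show algebraMap K B k • (0 : X →ₗ[B] N) x = 0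
    simp
  smul_add k f g := LinearMap.ext fun x => by
    show algebraMap K B k • (f + g) x = algebraMap K B k • f x + algebraMap K B k • g x
    simp [smul_add]
  add_smul k l f := LinearMap.ext fun x => by
    show algebraMap K B (k + l) • f x = algebraMap K B k • f x + algebraMap K B l • f x
    rw [map_add, add_smul]
  zero_smul f := LinearMap.ext fun x => by
    show algebraMap K B 0 • f x = 0
    rw [map_zero, zero_smul]

/-- The length `|Hom_B(X, N)|` of the group of `B`-linear maps `X → N` as a `K`-module. -/
noncomputable def homKLength : WithBot ℕ∞ :=
  letI : Module K (X →ₗ[B] N) := homKModule K B X N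
  Order.krullDim (Submodule K (X →ₗ[B] N))

/-- The canonical surjection from the free module on (the underlying set of) `X` to `X`. -/
noncomputable def freeCover : (X →₀ B) →ₗ[B] X :=
  Finsupp.linearCombination B id

/-- The length `|Ext¹_B(X, N)|` of `Ext¹` as a `K`-module, computed as the cokernel of
`Hom_B(F, N) → Hom_B(Ω X, N)` for the canonical free cover `F → X` with kernel `Ω X`. -/
noncomputable def ext1KLength : WithBot ℕ∞ :=
  letI : Module K (↥(LinearMap.ker (freeCover B X)) →ₗ[B] N) :=
    homKModule K B (↥(LinearMap.ker (freeCover B X))) N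
  let D : Submodule K (↥(LinearMap.ker (freeCover B X)) →ₗ[B] N) :=
    { carrier := {f | ∃ g : (X →₀ B) →ₗ[B] N,
        f = g.comp (LinearMap.ker (freeCover B X)).subtype}
      add_mem' := by
        rintro f₁ f₂ ⟨g₁, rfl⟩ ⟨g₂, rfl⟩
        exact ⟨g₁ + g₂, rfl⟩
      zero_mem' := ⟨0, rfl⟩
      smul_mem' := by
        rintro k f ⟨g, rfl⟩
        exact ⟨homKSMul K B _ N k g, rfl⟩ }
  Order.krullDim (Submodule K ((↥(LinearMap.ker (freeCover B X)) →ₗ[B] N) ⧸ D))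

end KLength

/-- Vanishing of `Ext¹_B(X, N)`: every short exact sequence `0 → N → E → X → 0` splits. -/
def Ext1IsZero (B : Type u) [Ring B] (X : Type u) [AddCommGroup X] [Module B X]
    (N : Type u) [AddCommGroup N] [Module B N] : Prop :=
  ∀ (E : Type u) [AddCommGroup E] [Module B E], ∀ (f : N →ₗ[B] E) (g : E →ₗ[B] X),
    Function.Injective f → Function.Surjective g → LinearMap.range f = LinearMap.ker g →
    ∃ s : X →ₗ[B] E, g.comp s = LinearMap.id

/-- The syzygy `Ω X`: the kernel of the canonical free cover of `X`. -/
noncomputable def syzygyRaw (B : Type u) [Ring B] (X : RawMod B) : RawMod B :=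
  ⟨↥(LinearMap.ker (freeCover B X.M))⟩

/-- Iterated syzygies. -/
noncomputable def syzygyIter (B : Type u) [Ring B] : ℕ → RawMod B → RawMod B
  | 0, X => X
  | n + 1, X => syzygyRaw B (syzygyIter B n X)

/-- Vanishing of `Ext^r_B(X, N)` for `r ≥ 1`, via `Ext^r(X, N) ≅ Ext¹(Ω^{r-1} X, N)`. -/
noncomputable def ExtIsZero (B : Type u) [Ring B] (X N : RawMod B) (r : ℕ) : Prop :=
  Ext1IsZero B (syzygyIter B (r - 1) X).M N.M

/-- `[X] = [M]` in the Grothendieck group `K₀`: the modules `X` and `M` have the same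
composition factors including multiplicities. -/
def SameCompFactors {B : Type u} [Ring B] (X M : ModA B) : Prop :=
  ∃ (n : ℕ) (s : Fin (n + 1) → Submodule B X.M) (t : Fin (n + 1) → Submodule B M.M)
    (σ : Equiv.Perm (Fin n)),
    s 0 = ⊥ ∧ s (Fin.last n) = ⊤ ∧ t 0 = ⊥ ∧ t (Fin.last n) = ⊤ ∧
    (∀ i : Fin n, s i.castSucc ≤ s i.succ) ∧ (∀ i : Fin n, t i.castSucc ≤ t i.succ) ∧
    ∀ i : Fin n,
      IsSimpleModule B (↥(s i.succ) ⧸ (s i.castSucc).comap (s i.succ).subtype) ∧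
      Nonempty ((↥(s i.succ) ⧸ (s i.castSucc).comap (s i.succ).subtype) ≃ₗ[B]
        (↥(t (σ i).succ) ⧸ (t (σ i).castSucc).comap (t (σ i).succ).subtype))

/-- A torsion class in `mod B`: a class of modules closed under factor modules and
extensions. -/
def IsTorsionClass (B : Type u) [Ring B] (T : Set (ModA B)) : Prop :=
  (∀ M ∈ T, ∀ (N : ModA B) (g : M.M →ₗ[B] N.M), Function.Surjective g → N ∈ T) ∧
  ∀ (X E M : ModA B) (f : X.M →ₗ[B] E.M) (g : E.M →ₗ[B] M.M),
    Function.Injective f → Function.Surjective g → LinearMap.range f = LinearMap.ker g →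
    X ∈ T → M ∈ T → E ∈ T

/-- A torsion class is functorially finite iff it is of the form `Fac(M)`. -/
def IsFunctoriallyFinite (B : Type u) [Ring B] (T : Set (ModA B)) : Prop :=
  ∃ M : ModA B,
    T = {N | ∃ (k : ℕ) (g : (Fin k → M.M) →ₗ[B] N.M), Function.Surjective g}

/-- A module `M` is `τ`-rigid if `Hom(M, τM) = 0`. -/
def IsTauRigid {B : Type u} [Ring B] (M : ModA B) : Prop :=
  ∀ N : ModA B, IsTauOf N M → ∀ f : M.M →ₗ[B] N.M, f = 0

/-- A module `M` is rigid if `Ext¹(M, M) = 0`. -/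
def IsRigid {B : Type u} [Ring B] (M : ModA B) : Prop := Ext1IsZero B M.M M.M

/-- `α(M) ≤ 2`: the middle term of any almost split sequence ending at `M` has at most
two indecomposable direct summands. -/
def AlphaLe2 {B : Type u} [Ring B] (M : ModA B) : Prop :=
  ∀ s : AlmostSplitSeq B, s.r.Iso M →
    ∀ (k : ℕ) (N : Fin k → Submodule B s.m.M),
      (∀ i, IsIndecMod B ↥(N i)) → iSupIndep N → (⨆ i, N i) = ⊤ → k ≤ 2

/-!
Suppose a cyclic component `Γ` has no projective vertex. Each of its vertices `x` then ends an
almost split sequence, so every arrow `z → x` gives an arrow `τ x → z`. Applied to the arrows of a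
cycle through `x`, this puts `τ x` on a cycle, whence `τ x ∈ Γ`. If `x` is minimal in `Γ` for the
preorder given by paths, the path `τ x → z → x` shows that each predecessor `z` of `x` is on a
cycle through `x`, hence is again a minimal vertex of `Γ`. If `Γ` is finite, the minimal vertices
therefore form a nonempty finite set `U` closed under predecessors.

Let `M` be the direct sum of the modules in `U`. Every element of a module of `U` comes from the
middle term of an almost split sequence, hence is a sum of values of irreducible maps between
modules of `U`. Such maps lie in the radical of `End M`, so `M = rad (End M) M`, and `M = 0` by
Nakayama's lemma, which is absurd.

An almost split sequence ending at an indecomposable nonprojective `X` comes from a right almost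
split map. Choose a functional on `End X` which vanishes on the radical but not at `1`, and let
`F₁ → F₀ → X → 0` be a presentation of `X` by free modules. The functional corresponds to a map
from `X` to the Nakayama transform of `F₀`, and pulling back the Nakayama transform of `F₁ → F₀`
along it gives the right almost split map.

The duality `Hom_R(-, Hom_K(R, E))` into modules over the opposite algebra, for a dualizing
`K`-module `E`, turns the existence of a projective vertex into that of an injective one.
-/

section Factorization

variable {R M N P : Type*} [Ring R] [AddCommGroup M] [Module R M] [AddCommGroup N] [Module R N]
  [AddCommGroup P] [Module R P]

theorem exists_comp_eq_of_ker_le {g : M →ₗ[R] N} (hg : Function.Surjective g) {h : M →ₗ[R] P}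
    (hker : LinearMap.ker g ≤ LinearMap.ker h) : ∃ c : N →ₗ[R] P, c ∘ₗ g = h := by
  refine ⟨(LinearMap.ker g).liftQ h hker ∘ₗ (g.quotKerEquivOfSurjective hg).symm.toLinearMap, ?_⟩
  ext x
  have hx : (g.quotKerEquivOfSurjective hg).symm (g x) = Submodule.Quotient.mk x :=
    (LinearEquiv.symm_apply_eq _).2 rfl
  simp only [LinearMap.comp_apply, LinearEquiv.coe_coe, hx]
  rfl

theorem exists_comp_eq_of_range_le {f : M →ₗ[R] N} (hf : Function.Injective f) {h : P →ₗ[R] N}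
    (hrange : LinearMap.range h ≤ LinearMap.range f) : ∃ c : P →ₗ[R] M, f ∘ₗ c = h := by
  refine ⟨(LinearEquiv.ofInjective f hf).symm.toLinearMap ∘ₗ
    h.codRestrict (LinearMap.range f) fun x => hrange ⟨x, rfl⟩, ?_⟩
  ext x
  exact congrArg Subtype.val ((LinearEquiv.ofInjective f hf).apply_symm_apply _)

end Factorization

namespace ModA

variable {R : Type u} [Ring R] {X Y Z : ModA R}

instance : IsNoetherian R X.M := (isFiniteLength_iff_isNoetherian_isArtinian.1 X.finLen).1

instance : IsArtinian R X.M := (isFiniteLength_iff_isNoetherian_isArtinian.1 X.finLen).2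

/-- A module of finite length as an object of `mod R`. -/
abbrev of (R : Type u) [Ring R] (M : Type u) [AddCommGroup M] [Module R M] [IsNoetherian R M]
    [IsArtinian R M] : ModA R :=
  ⟨M, isFiniteLength_iff_isNoetherian_isArtinian.2 ⟨inferInstance, inferInstance⟩⟩

theorem splitMonoMap_of_bijective_comp {h : X.M →ₗ[R] Y.M} {k : Y.M →ₗ[R] X.M}
    (hkh : Function.Bijective (k ∘ₗ h)) : SplitMonoMap h :=
  ⟨(LinearEquiv.ofBijective _ hkh).symm.toLinearMap ∘ₗ k,
    LinearMap.ext (LinearEquiv.ofBijective _ hkh).symm_apply_apply⟩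

theorem splitEpiMap_of_bijective_comp {h : X.M →ₗ[R] Y.M} {k : Y.M →ₗ[R] X.M}
    (hkh : Function.Bijective (k ∘ₗ h)) : SplitEpiMap k :=
  ⟨h ∘ₗ (LinearEquiv.ofBijective _ hkh).symm.toLinearMap,
    LinearMap.ext (LinearEquiv.ofBijective _ hkh).apply_symm_apply⟩

theorem splitMonoMap_of_comp {f : X.M →ₗ[R] Y.M} {g : Y.M →ₗ[R] Z.M}
    (h : SplitMonoMap (g ∘ₗ f)) : SplitMonoMap f :=
  let ⟨r, hr⟩ := h
  ⟨r ∘ₗ g, hr⟩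

theorem splitEpiMap_of_comp {f : X.M →ₗ[R] Y.M} {g : Y.M →ₗ[R] Z.M}
    (h : SplitEpiMap (g ∘ₗ f)) : SplitEpiMap g :=
  let ⟨s, hs⟩ := h
  ⟨f ∘ₗ s, hs⟩

theorem not_splitMonoMap_of_range_eq_ker {f : X.M →ₗ[R] Y.M} {g : Y.M →ₗ[R] Z.M}
    (hg : Function.Surjective g) (hfg : LinearMap.range f = LinearMap.ker g)
    (hsplit : ¬SplitEpiMap g) : ¬SplitMonoMap f := by
  rintro ⟨r, hr⟩
  have hgf : g ∘ₗ f = 0 := LinearMap.range_le_ker_iff.1 hfg.le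
  have hker : LinearMap.ker g ≤ LinearMap.ker (LinearMap.id - f ∘ₗ r) := by
    rw [← hfg, LinearMap.range_le_ker_iff, LinearMap.sub_comp, LinearMap.comp_assoc, hr]
    exact sub_self _
  obtain ⟨s, hs⟩ := exists_comp_eq_of_ker_le hg hker
  refine hsplit ⟨s, (LinearMap.cancel_right hg).1 ?_⟩
  rw [LinearMap.comp_assoc, hs, LinearMap.comp_sub, ← LinearMap.comp_assoc, hgf,
    LinearMap.zero_comp, sub_zero]
  rfl

namespace IsIndec

theorem comp_eq_id (hY : Y.IsIndec) [Nontrivial X.M] {h : X.M →ₗ[R] Y.M} {k : Y.M →ₗ[R] X.M}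
    (hkh : k ∘ₗ h = LinearMap.id) : h ∘ₗ k = LinearMap.id := by
  have hkh' : ∀ x, k (h x) = x := LinearMap.congr_fun hkh
  refine (hY.2 (h ∘ₗ k) (by ext y; simp [hkh'])).resolve_left fun h0 => ?_
  obtain ⟨x, hx⟩ := exists_ne (0 : X.M)
  refine hx ?_
  calc x = k ((h ∘ₗ k) (h x)) := by simp [hkh']
    _ = 0 := by simp [h0]

theorem splitEpiMap_of_splitMonoMap (hY : Y.IsIndec) [Nontrivial X.M] {f : X.M →ₗ[R] Y.M}
    (hf : SplitMonoMap f) : SplitEpiMap f :=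
  let ⟨r, hr⟩ := hf
  ⟨r, hY.comp_eq_id hr⟩

theorem splitMonoMap_of_splitEpiMap (hX : X.IsIndec) [Nontrivial Y.M] {f : X.M →ₗ[R] Y.M}
    (hf : SplitEpiMap f) : SplitMonoMap f :=
  let ⟨s, hs⟩ := hf
  ⟨s, hX.comp_eq_id hs⟩

theorem bijective_or_isNilpotent (hX : X.IsIndec) (f : Module.End R X.M) :
    Function.Bijective f ∨ IsNilpotent f := by
  obtain ⟨n, hn⟩ := Filter.eventually_atTop.1 f.eventually_isCompl_ker_pow_range_pow
  have hc := (hn (n + 1) n.le_succ).symm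
  have hrange := Submodule.range_projection hc
  have hker := Submodule.ker_projection hc
  rcases hX.2 _ (Submodule.isIdempotentElem_projection hc) with h | h <;> rw [h] at hrange hker
  · exact Or.inr ⟨n + 1, LinearMap.range_eq_bot.1 (hrange.symm.trans LinearMap.range_zero)⟩
  · have hbij : Function.Bijective (f ^ (n + 1)) :=
      ⟨LinearMap.ker_eq_bot.1 (hker.symm.trans LinearMap.ker_id),
        LinearMap.range_eq_top.1 (hrange.symm.trans LinearMap.range_id)⟩
    exact Or.inl <| (Module.End.isUnit_iff _).1 <|
      (isUnit_pow_iff n.succ_ne_zero).1 ((Module.End.isUnit_iff _).2 hbij)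

theorem bijective_or_bijective (hX : X.IsIndec) {f g : Module.End R X.M} (hfg : f + g = 1) :
    Function.Bijective f ∨ Function.Bijective g := by
  refine (hX.bijective_or_isNilpotent f).imp_right fun hf => ?_
  rw [eq_sub_of_add_eq' hfg]
  exact (Module.End.isUnit_iff _).1 hf.isUnit_one_sub

theorem isLocalRing_end (hX : X.IsIndec) : IsLocalRing (Module.End R X.M) :=
  have := hX.1
  ⟨fun hab => by simpa only [Module.End.isUnit_iff] using hX.bijective_or_bijective hab⟩

end IsIndec

/-- The endomorphisms of `X` of the form `i ∘ p` where `i` is the inclusion of an indecomposable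
direct summand and `p` is a projection onto it. -/
def indecProjections (X : ModA R) : Set (X.M →ₗ[R] X.M) :=
  {e | ∃ (Z : ModA R) (i : Z.M →ₗ[R] X.M) (p : X.M →ₗ[R] Z.M),
    Z.IsIndec ∧ p ∘ₗ i = LinearMap.id ∧ e = i ∘ₗ p}

theorem comp_comp_mem_closure_indecProjections {i : Y.M →ₗ[R] X.M} {p : X.M →ₗ[R] Y.M}
    (hpi : p ∘ₗ i = LinearMap.id) {a : Y.M →ₗ[R] Y.M}
    (ha : a ∈ AddSubgroup.closure Y.indecProjections) :
    i ∘ₗ a ∘ₗ p ∈ AddSubgroup.closure X.indecProjections := by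
  induction ha using AddSubgroup.closure_induction with
  | mem a ha =>
    obtain ⟨Z, j, q, hZ, hqj, rfl⟩ := ha
    refine AddSubgroup.subset_closure ⟨Z, i ∘ₗ j, q ∘ₗ p, hZ, ?_, rfl⟩
    rw [LinearMap.comp_assoc, ← LinearMap.comp_assoc _ i, hpi, LinearMap.id_comp, hqj]
  | zero => simp only [LinearMap.zero_comp, LinearMap.comp_zero, zero_mem]
  | add a b _ _ ha hb => simpa only [LinearMap.add_comp, LinearMap.comp_add] using add_mem ha hb
  | neg a _ ha => simpa only [LinearMap.neg_comp, LinearMap.comp_neg] using neg_mem ha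

theorem mem_closure_indecProjections_of_isIdempotentElem {e : Module.End R X.M}
    (he : IsIdempotentElem e)
    (hid : LinearMap.id ∈ AddSubgroup.closure (of R (LinearMap.range e)).indecProjections) :
    e ∈ AddSubgroup.closure X.indecProjections :=
  comp_comp_mem_closure_indecProjections (X := X) (Y := of R (LinearMap.range e))
    (i := (LinearMap.range e).subtype) (p := e.rangeRestrict)
    (LinearMap.ext fun ⟨_, x, hx⟩ => Subtype.ext (hx ▸ LinearMap.congr_fun he x)) hid

theorem id_mem_closure_indecProjections (X : ModA R) :
    LinearMap.id ∈ AddSubgroup.closure X.indecProjections := by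
  induction h : Module.length R X.M using WellFoundedLT.induction generalizing X with
  | ind n ih =>
    subst h
    rcases subsingleton_or_nontrivial X.M with hX | hX
    · rw [Subsingleton.elim LinearMap.id (0 : X.M →ₗ[R] X.M)]
      exact zero_mem _
    by_cases hind : X.IsIndec
    · exact AddSubgroup.subset_closure ⟨X, LinearMap.id, LinearMap.id, hind, rfl, rfl⟩
    obtain ⟨e, he, he0, he1⟩ : ∃ e : Module.End R X.M, IsIdempotentElem e ∧ e ≠ 0 ∧ e ≠ 1 := by
      by_contra! hcon
      exact hind ⟨hX, fun f hf => or_iff_not_imp_left.2 (hcon f hf)⟩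
    have summand : ∀ e : Module.End R X.M, IsIdempotentElem e → e ≠ 1 →
        e ∈ AddSubgroup.closure X.indecProjections := by
      intro e he he1
      refine mem_closure_indecProjections_of_isIdempotentElem he (ih _ ?_ _ rfl)
      refine Submodule.length_lt fun htop => he1 (LinearMap.ext fun x => ?_)
      obtain ⟨y, rfl⟩ := LinearMap.range_eq_top.1 htop x
      exact LinearMap.congr_fun he y
    have hsum : (LinearMap.id : X.M →ₗ[R] X.M) = e + (1 - e) := (add_sub_cancel e _).symm
    rw [hsum]
    exact add_mem (summand e he he1) (summand (1 - e) he.one_sub (by simpa using he0))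

end ModA

theorem IsIrred.linearEquiv_comp_comp {R : Type u} [Ring R] {X Y X' Y' : ModA R}
    {f : X.M →ₗ[R] Y.M} (hf : IsIrred f) (e : X'.M ≃ₗ[R] X.M) (e' : Y.M ≃ₗ[R] Y'.M) :
    IsIrred (e'.toLinearMap ∘ₗ f ∘ₗ e.toLinearMap) := by
  refine ⟨fun ⟨r, hr⟩ => hf.1 ⟨e.toLinearMap ∘ₗ r ∘ₗ e'.toLinearMap, ?_⟩,
    fun ⟨s, hs⟩ => hf.2.1 ⟨e.toLinearMap ∘ₗ s ∘ₗ e'.toLinearMap, ?_⟩, fun W a b hab => ?_⟩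
  · ext x
    have := LinearMap.congr_fun hr (e.symm x)
    simp only [LinearMap.comp_apply, LinearEquiv.coe_coe, LinearEquiv.apply_symm_apply,
      LinearMap.id_apply] at this
    simp [this]
  · ext y
    simpa using LinearMap.congr_fun hs (e' y)
  have hfactor : (e'.symm.toLinearMap ∘ₗ b) ∘ₗ (a ∘ₗ e.symm.toLinearMap) = f := by
    ext x
    have := LinearMap.congr_fun hab (e.symm x)
    simp only [LinearMap.comp_apply, LinearEquiv.coe_coe, LinearEquiv.apply_symm_apply] at this
    simp [this]
  refine (hf.2.2 W _ _ hfactor).imp (fun ⟨r, hr⟩ => ⟨e.symm.toLinearMap ∘ₗ r, ?_⟩)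
    fun ⟨s, hs⟩ => ⟨s ∘ₗ e'.symm.toLinearMap, ?_⟩
  · ext x
    have := LinearMap.congr_fun hr (e x)
    simp only [LinearMap.comp_apply, LinearEquiv.coe_coe, LinearEquiv.symm_apply_apply,
      LinearMap.id_apply] at this
    simp [this]
  · ext y
    have := congrArg e' (LinearMap.congr_fun hs (e'.symm y))
    simpa using this

namespace AlmostSplitSeq

variable {R : Type u} [Ring R] (s : AlmostSplitSeq R) {Z : ModA R}

theorem not_splitMonoMap_comp_f (p : s.m.M →ₗ[R] Z.M) : ¬SplitMonoMap (p ∘ₗ s.f) :=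
  fun hp => ModA.not_splitMonoMap_of_range_eq_ker s.surj s.exact s.not_split
    (ModA.splitMonoMap_of_comp hp)

theorem not_splitEpiMap_g_comp (i : Z.M →ₗ[R] s.m.M) : ¬SplitEpiMap (s.g ∘ₗ i) :=
  fun h => s.not_split (ModA.splitEpiMap_of_comp h)

theorem not_splitEpiMap_comp_f [Nontrivial Z.M] (p : s.m.M →ₗ[R] Z.M) :
    ¬SplitEpiMap (p ∘ₗ s.f) :=
  fun h => s.not_splitMonoMap_comp_f p (s.l_indec.splitMonoMap_of_splitEpiMap h)

theorem not_splitMonoMap_g_comp [Nontrivial Z.M] (i : Z.M →ₗ[R] s.m.M) :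
    ¬SplitMonoMap (s.g ∘ₗ i) :=
  fun h => s.not_splitEpiMap_g_comp i (s.r_indec.splitEpiMap_of_splitMonoMap h)

theorem isIrred_g_comp (hZ : Z.IsIndec) {i : Z.M →ₗ[R] s.m.M} {p : s.m.M →ₗ[R] Z.M}
    (hpi : p ∘ₗ i = LinearMap.id) : IsIrred (s.g ∘ₗ i) := by
  have := hZ.1
  refine ⟨s.not_splitMonoMap_g_comp i, s.not_splitEpiMap_g_comp i, fun W a b hab =>
    or_iff_not_imp_right.2 fun hb => ?_⟩
  obtain ⟨b', hb'⟩ := s.right_almost W b hb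
  have hrange : LinearMap.range (i - b' ∘ₗ a) ≤ LinearMap.range s.f := by
    rw [s.exact, LinearMap.range_le_ker_iff, LinearMap.comp_sub, ← LinearMap.comp_assoc, hb', hab,
      sub_self]
  obtain ⟨c, hc⟩ := exists_comp_eq_of_range_le s.inj hrange
  have hsum : ((p ∘ₗ b') ∘ₗ a + (p ∘ₗ s.f) ∘ₗ c : Module.End R Z.M) = 1 := by
    rw [LinearMap.comp_assoc, LinearMap.comp_assoc, ← LinearMap.comp_add, hc, add_sub_cancel, hpi]
    rfl
  rcases hZ.bijective_or_bijective hsum with h | h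
  · exact ModA.splitMonoMap_of_bijective_comp h
  · exact absurd (ModA.splitEpiMap_of_bijective_comp h) (s.not_splitEpiMap_comp_f p)

theorem isIrred_comp_f (hZ : Z.IsIndec) {i : Z.M →ₗ[R] s.m.M} {p : s.m.M →ₗ[R] Z.M}
    (hpi : p ∘ₗ i = LinearMap.id) : IsIrred (p ∘ₗ s.f) := by
  have := hZ.1
  refine ⟨s.not_splitMonoMap_comp_f p, s.not_splitEpiMap_comp_f p, fun W a b hab =>
    or_iff_not_imp_left.2 fun ha => ?_⟩
  obtain ⟨a', ha'⟩ := s.left_almost W a ha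
  have hker : LinearMap.ker s.g ≤ LinearMap.ker (p - b ∘ₗ a') := by
    rw [← s.exact, LinearMap.range_le_ker_iff, LinearMap.sub_comp, LinearMap.comp_assoc, ha', hab,
      sub_self]
  obtain ⟨c, hc⟩ := exists_comp_eq_of_ker_le s.surj hker
  have hsum : (b ∘ₗ a' ∘ₗ i + c ∘ₗ s.g ∘ₗ i : Module.End R Z.M) = 1 := by
    rw [← LinearMap.comp_assoc, ← LinearMap.comp_assoc, ← LinearMap.add_comp, hc, add_sub_cancel,
      hpi]
    rfl
  rcases hZ.bijective_or_bijective hsum with h | h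
  · exact ModA.splitEpiMap_of_bijective_comp h
  · exact absurd (ModA.splitMonoMap_of_bijective_comp h) (s.not_splitMonoMap_g_comp i)

theorem exists_comp_eq_id_of_isIrred {h : Z.M →ₗ[R] s.r.M} (hh : IsIrred h) :
    ∃ (i : Z.M →ₗ[R] s.m.M) (p : s.m.M →ₗ[R] Z.M), p ∘ₗ i = LinearMap.id := by
  obtain ⟨i, hi⟩ := s.right_almost Z h hh.2.1
  obtain ⟨p, hp⟩ := (hh.2.2 _ i s.g hi).resolve_right s.not_split
  exact ⟨i, p, hp⟩

end AlmostSplitSeq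

namespace ARVertex

variable {R : Type u} [Ring R] {X Y : IndecModA R} {x y z : ARVertex R}

theorem mk_eq_mk : mk X = mk Y ↔ X.1.Iso Y.1 := Quotient.eq (r := isoSetoid R)

theorem exists_mk_eq (x : ARVertex R) : ∃ X : IndecModA R, mk X = x := Quotient.exists_rep x

theorem exists_isIrred_of_arArrow (h : ARArrow (mk X) (mk Y)) :
    ∃ f : X.1.M →ₗ[R] Y.1.M, IsIrred f := by
  obtain ⟨X', Y', f, hf, hX, hY⟩ := h
  obtain ⟨e⟩ := mk_eq_mk.1 hX
  obtain ⟨e'⟩ := mk_eq_mk.1 hY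
  exact ⟨_, hf.linearEquiv_comp_comp e.symm e'⟩

theorem arArrow_of_tauRel (hxy : TauRel x y) (hzy : ARArrow z y) : ARArrow x z := by
  obtain ⟨X, Y, rfl, rfl, s, hl, hr⟩ := hxy
  obtain ⟨Z, rfl⟩ := exists_mk_eq z
  rw [← mk_eq_mk (X := ⟨s.r, s.r_indec⟩).2 hr] at hzy
  obtain ⟨h, hh⟩ := exists_isIrred_of_arArrow hzy
  obtain ⟨i, p, hpi⟩ := s.exists_comp_eq_id_of_isIrred hh
  exact ⟨⟨s.l, s.l_indec⟩, Z, _, s.isIrred_comp_f Z.2 hpi, mk_eq_mk.2 hl, rfl⟩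

end ARVertex

section RightAlmostSplit

variable {R : Type u} [Ring R] {L M X Z : ModA R}

/-- Right almost split homomorphisms: `g` is not a retraction and every homomorphism to its target
which is not a retraction factors through `g`. -/
def IsRightAlmostSplit (g : M.M →ₗ[R] X.M) : Prop :=
  ¬SplitEpiMap g ∧ ∀ (Z : ModA R) (h : Z.M →ₗ[R] X.M), ¬SplitEpiMap h →
    ∃ h' : Z.M →ₗ[R] M.M, g ∘ₗ h' = h

/-- Right minimal homomorphisms: every endomorphism of the source over `g` is an automorphism. -/
def IsRightMinimal (g : M.M →ₗ[R] X.M) : Prop :=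
  ∀ w : M.M →ₗ[R] M.M, g ∘ₗ w = g → Function.Bijective w

theorem IsRightAlmostSplit.comp_subtype_range {g : M.M →ₗ[R] X.M} (hg : IsRightAlmostSplit g)
    {w : M.M →ₗ[R] M.M} (hw : g ∘ₗ w = g) :
    IsRightAlmostSplit (M := ModA.of R (LinearMap.range w))
      (g ∘ₗ (LinearMap.range w).subtype) := by
  refine ⟨fun h => hg.1 (ModA.splitEpiMap_of_comp (X := ModA.of R (LinearMap.range w)) h),
    fun Z h hh => ?_⟩
  obtain ⟨h', rfl⟩ := hg.2 Z h hh
  exact ⟨w.rangeRestrict ∘ₗ h', LinearMap.ext fun z => LinearMap.congr_fun hw (h' z)⟩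

theorem IsRightAlmostSplit.exists_isRightMinimal {g₀ : M.M →ₗ[R] X.M}
    (hg₀ : IsRightAlmostSplit g₀) :
    ∃ (N : ModA R) (g : N.M →ₗ[R] X.M), IsRightAlmostSplit g ∧ IsRightMinimal g := by
  obtain ⟨N, ⟨g, hg⟩, hmin⟩ := (InvImage.wf (fun N : ModA R => Module.length R N.M)
    wellFounded_lt).has_min {N | ∃ g : N.M →ₗ[R] X.M, IsRightAlmostSplit g} ⟨M, g₀, hg₀⟩
  refine ⟨N, g, hg, fun w hw => ?_⟩
  have hsurj : Function.Surjective w := by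
    by_contra hns
    exact hmin _ ⟨_, hg.comp_subtype_range hw⟩
      (Submodule.length_lt fun h => hns (LinearMap.range_eq_top.1 h))
  exact ⟨IsNoetherian.injective_of_surjective_endomorphism w hsurj, hsurj⟩

theorem IsRightAlmostSplit.surjective [IsArtinianRing R] {g : M.M →ₗ[R] X.M}
    (hg : IsRightAlmostSplit g) (hX : ¬Module.Projective R X.M) : Function.Surjective g := by
  obtain ⟨n, q, hq⟩ := Module.Finite.exists_fin' R X.M
  obtain ⟨q', rfl⟩ := hg.2 (ModA.of R (Fin n → R)) q fun ⟨s, hs⟩ =>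
    hX (Module.Projective.of_split s q hs)
  exact Function.Surjective.of_comp hq

theorem exists_pushout {f : L.M →ₗ[R] M.M} {g : M.M →ₗ[R] X.M} (hf : Function.Injective f)
    (hfg : LinearMap.range f = LinearMap.ker g) (h : L.M →ₗ[R] Z.M) :
    ∃ (P : ModA R) (a : Z.M →ₗ[R] P.M) (b : M.M →ₗ[R] P.M) (g' : P.M →ₗ[R] X.M),
      a ∘ₗ h = b ∘ₗ f ∧ Function.Injective a ∧ LinearMap.range a = LinearMap.ker g' ∧
        g' ∘ₗ b = g := by
  have hgf : ∀ x, g (f x) = 0 := LinearMap.congr_fun (LinearMap.range_le_ker_iff.1 hfg.le)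
  let Q : Submodule R (Z.M × M.M) := LinearMap.range (h.prod (-f))
  let g' : ((Z.M × M.M) ⧸ Q) →ₗ[R] X.M := Q.liftQ (g ∘ₗ LinearMap.snd R Z.M M.M) <| by
    rintro _ ⟨x, rfl⟩
    simp [hgf]
  have hcomm : (Q.mkQ ∘ₗ LinearMap.inl R Z.M M.M) ∘ₗ h =
      (Q.mkQ ∘ₗ LinearMap.inr R Z.M M.M) ∘ₗ f := by
    ext x
    exact (Submodule.Quotient.eq Q).2 ⟨x, by simp⟩
  refine ⟨ModA.of R ((Z.M × M.M) ⧸ Q), Q.mkQ ∘ₗ LinearMap.inl R Z.M M.M,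
    Q.mkQ ∘ₗ LinearMap.inr R Z.M M.M, g', hcomm, ?_, le_antisymm ?_ ?_, ?_⟩
  · rw [← LinearMap.ker_eq_bot, eq_bot_iff]
    intro z hz
    obtain ⟨x, hx⟩ := (Submodule.Quotient.mk_eq_zero Q).1 hz
    obtain ⟨hxz, hfx⟩ : h x = z ∧ f x = 0 := by simpa using hx
    rw [Submodule.mem_bot, ← hxz, (map_eq_zero_iff f hf).1 hfx, map_zero]
  · rintro _ ⟨z, rfl⟩
    simp [g']
  · intro p hp
    obtain ⟨⟨z, m⟩, rfl⟩ := Q.mkQ_surjective p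
    obtain ⟨x, rfl⟩ : m ∈ LinearMap.range f := hfg.ge (by simpa [g'] using hp)
    have hsplit : Q.mkQ (z, f x) = Q.mkQ (z, 0) + Q.mkQ (0, f x) := by
      rw [← map_add, Prod.mk_add_mk, add_zero, zero_add]
    refine ⟨z + h x, ?_⟩
    rw [hsplit, map_add]
    exact congrArg _ (LinearMap.congr_fun hcomm x)
  · ext m
    simp [g']

theorem exists_comp_eq_of_not_splitMonoMap {f : L.M →ₗ[R] M.M} {g : M.M →ₗ[R] X.M}
    (hg : IsRightAlmostSplit g) (hmin : IsRightMinimal g) (hf : Function.Injective f)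
    (hfg : LinearMap.range f = LinearMap.ker g) {h : L.M →ₗ[R] Z.M} (hh : ¬SplitMonoMap h) :
    ∃ h' : M.M →ₗ[R] Z.M, h' ∘ₗ f = h := by
  -- If the pushout along `h` splits, `h` extends along `f`. Otherwise its epimorphism factors
  -- through `g`, and by minimality of `g` this factorization restricts to a retraction of `h`.
  have hgf : g ∘ₗ f = 0 := LinearMap.range_le_ker_iff.1 hfg.le
  obtain ⟨P, a, b, g', hcomm, ha, hag', hg'b⟩ := exists_pushout hf hfg h
  by_cases hg' : SplitEpiMap g'
  · obtain ⟨s, hs⟩ := hg'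
    have hrange : LinearMap.range (b - s ∘ₗ g) ≤ LinearMap.range a := by
      rw [hag', LinearMap.range_le_ker_iff, LinearMap.comp_sub, hg'b, ← LinearMap.comp_assoc, hs]
      exact sub_self _
    obtain ⟨c, hc⟩ := exists_comp_eq_of_range_le ha hrange
    refine ⟨c, (LinearMap.cancel_left ha).1 ?_⟩
    rw [← LinearMap.comp_assoc, hc, LinearMap.sub_comp, LinearMap.comp_assoc, hgf,
      LinearMap.comp_zero, sub_zero, hcomm]
  · refine absurd ?_ hh
    obtain ⟨t, ht⟩ := hg.2 P g' hg'
    have hw : g ∘ₗ t ∘ₗ b = g := by rw [← LinearMap.comp_assoc, ht, hg'b]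
    let w := LinearEquiv.ofBijective (t ∘ₗ b) (hmin _ hw)
    have hw' : g ∘ₗ w.symm.toLinearMap = g := by
      conv_lhs => rw [← hw]
      exact LinearMap.ext fun m => congrArg g (w.apply_symm_apply m)
    have hga : g' ∘ₗ a = 0 := LinearMap.range_le_ker_iff.1 hag'.le
    have hrange : LinearMap.range (w.symm.toLinearMap ∘ₗ t ∘ₗ a) ≤ LinearMap.range f := by
      rw [hfg, LinearMap.range_le_ker_iff, ← LinearMap.comp_assoc, hw', ← LinearMap.comp_assoc, ht,
        hga]
    obtain ⟨r, hr⟩ := exists_comp_eq_of_range_le hf hrange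
    refine ⟨r, (LinearMap.cancel_left hf).1 ?_⟩
    rw [← LinearMap.comp_assoc, hr, LinearMap.comp_assoc, LinearMap.comp_assoc, hcomm]
    exact LinearMap.ext fun x => w.symm_apply_apply (f x)

theorem ModA.isIndec_of_left_almost {f : L.M →ₗ[R] M.M} (hf : ¬SplitMonoMap f)
    (hleft : ∀ (Z : ModA R) (h : L.M →ₗ[R] Z.M), ¬SplitMonoMap h →
      ∃ h' : M.M →ₗ[R] Z.M, h' ∘ₗ f = h) : L.IsIndec := by
  refine ⟨?_, fun e he => ?_⟩
  · by_contra hL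
    rw [not_nontrivial_iff_subsingleton] at hL
    exact hf ⟨0, Subsingleton.elim _ _⟩
  have eq_one : ∀ e : Module.End R L.M, IsIdempotentElem e → SplitMonoMap (Y := L) e → e = 1 :=
    fun e he ⟨r, hr⟩ => calc
      e = (r * e : Module.End R L.M) * e := (congrArg (· * e) hr).symm
      _ = 1 := by rw [mul_assoc, he.eq]; exact hr
  by_contra! hne
  obtain ⟨a, ha⟩ := hleft L e fun h => hne.2 (eq_one e he h)
  obtain ⟨b, hb⟩ := hleft L (1 - e) fun h =>
    hne.1 (by simpa using eq_one _ (IsIdempotentElem.one_sub he) h)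
  refine hf ⟨a + b, ?_⟩
  rw [LinearMap.add_comp, ha, hb]
  exact add_sub_cancel e _

theorem IsRightAlmostSplit.exists_almostSplitSeq [IsArtinianRing R] {g₀ : M.M →ₗ[R] X.M}
    (hg₀ : IsRightAlmostSplit g₀) (hX : X.IsIndec) (hproj : ¬Module.Projective R X.M) :
    ∃ s : AlmostSplitSeq R, s.r = X := by
  obtain ⟨N, g, hg, hmin⟩ := hg₀.exists_isRightMinimal
  have hsurj := hg.surjective hproj
  let L := ModA.of R (LinearMap.ker g)
  let f : L.M →ₗ[R] N.M := (LinearMap.ker g).subtype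
  have hf : Function.Injective f := Subtype.val_injective
  have hfg : LinearMap.range f = LinearMap.ker g := Submodule.range_subtype _
  have hleft : ∀ (Z : ModA R) (h : L.M →ₗ[R] Z.M), ¬SplitMonoMap h →
      ∃ h' : N.M →ₗ[R] Z.M, h' ∘ₗ f = h :=
    fun _ _ => exists_comp_eq_of_not_splitMonoMap hg hmin hf hfg
  exact ⟨{  l := L, m := N, r := X, f := f, g := g, inj := hf, surj := hsurj, exact := hfg
            not_split := hg.1
            l_indec := ModA.isIndec_of_left_almost
              (ModA.not_splitMonoMap_of_range_eq_ker hsurj hfg hg.1) hleft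
            r_indec := hX
            right_almost := hg.2
            left_almost := hleft }, rfl⟩

end RightAlmostSplit

section Nakayama

variable {R : Type u} [Ring R] {ι : Type*} [Finite ι] {X : ι → ModA R}

theorem single_comp_comp_proj_mem_jacobson [DecidableEq ι] {u v : ι} (hv : (X v).IsIndec)
    {h : (X v).M →ₗ[R] (X u).M} (hh : ¬SplitMonoMap h) :
    LinearMap.single R (fun i => (X i).M) u ∘ₗ h ∘ₗ LinearMap.proj v ∈
      Ring.jacobson (Module.End R (∀ i, (X i).M)) := by
  rw [← Ideal.jacobson_bot, Ideal.mem_jacobson_iff]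
  intro a
  let c : (X u).M →ₗ[R] (X v).M := -(LinearMap.proj v ∘ₗ a ∘ₗ LinearMap.single R _ u)
  let b : Module.End R (∀ i, (X i).M) :=
    1 + a * (LinearMap.single R (fun i => (X i).M) u ∘ₗ h ∘ₗ LinearMap.proj v)
  have hch : Function.Bijective (1 - c ∘ₗ h : Module.End R (X v).M) :=
    (hv.bijective_or_bijective (add_sub_cancel (c ∘ₗ h) 1)).resolve_left fun hb =>
      hh (ModA.splitMonoMap_of_bijective_comp hb)
  have hb : Function.Injective b := by
    rw [injective_iff_map_eq_zero]
    intro m hm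
    have hmv : m v = 0 := (injective_iff_map_eq_zero _).1 hch.1 (m v) <| by
      simpa [b, c] using congrFun hm v
    simpa [b, hmv] using hm
  obtain ⟨z, hz⟩ := ((Module.End.isUnit_iff b).2
    (IsArtinian.bijective_of_injective_endomorphism b hb)).exists_left_inv
  refine ⟨z, ?_⟩
  rw [Ideal.mem_bot, sub_eq_zero, ← hz, mul_add, mul_one, mul_assoc, add_comm]

theorem single_mem_jacobson_smul_top [DecidableEq ι] {u : ι}
    (hX : ∀ i, (X i).IsIndec) {s : AlmostSplitSeq R}
    (hs : s.r.Iso (X u))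
    (hclosed : ∀ (Z : ModA R) (f : Z.M →ₗ[R] (X u).M), Z.IsIndec → IsIrred f → ∃ v, Z.Iso (X v))
    (x : (X u).M) :
    (Pi.single u x : ∀ i, (X i).M) ∈ Ring.jacobson (Module.End R (∀ i, (X i).M)) •
      (⊤ : Submodule (Module.End R (∀ i, (X i).M)) (∀ i, (X i).M)) := by
  obtain ⟨e⟩ := hs
  obtain ⟨y, hy⟩ := s.surj (e.symm x)
  obtain rfl : e (s.g y) = x := by rw [hy, e.apply_symm_apply]
  suffices h : ∀ p ∈ AddSubgroup.closure s.m.indecProjections,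
      (Pi.single u (e (s.g (p y))) : ∀ i, (X i).M) ∈
        Ring.jacobson (Module.End R (∀ i, (X i).M)) •
          (⊤ : Submodule (Module.End R (∀ i, (X i).M)) (∀ i, (X i).M)) from
    h _ s.m.id_mem_closure_indecProjections
  intro p hp
  induction hp using AddSubgroup.closure_induction with
  | mem p hp =>
    obtain ⟨Z, i, q, hZ, hqi, rfl⟩ := hp
    have hirr := (s.isIrred_g_comp hZ hqi).linearEquiv_comp_comp (LinearEquiv.refl R Z.M) e
    obtain ⟨v, ⟨θ⟩⟩ := hclosed Z _ hZ hirr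
    have hirr' := hirr.linearEquiv_comp_comp θ.symm (LinearEquiv.refl R (X u).M)
    have hmem := Submodule.smul_mem_smul (single_comp_comp_proj_mem_jacobson (hX v) hirr'.1)
      (Submodule.mem_top (x := (Pi.single v (θ (q y)) : ∀ i, (X i).M)))
    simpa [Module.End.smul_def] using hmem
  | zero => simp
  | add p p' _ _ hp hp' =>
    simpa only [LinearMap.add_apply, map_add, Pi.single_add] using
      add_mem hp hp'
  | neg p _ hp => simpa only [LinearMap.neg_apply, map_neg, Pi.single_neg] using neg_mem hp

theorem exists_isIrred_forall_not_iso (K : Type u) [CommRing K] [Algebra K R] [Module.Finite K R]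
    [Nonempty ι] (hX : ∀ i, (X i).IsIndec) (hseq : ∀ i, ∃ s : AlmostSplitSeq R, s.r = X i) :
    ∃ (u : ι) (Z : ModA R) (f : Z.M →ₗ[R] (X u).M), Z.IsIndec ∧ IsIrred f ∧ ∀ v, ¬Z.Iso (X v) := by
  classical
  by_contra! hclosed
  let M := ∀ i, (X i).M
  let S := Module.End R M
  let _ (i : ι) : Module K (X i).M := Module.compHom _ (algebraMap K R)
  have (i : ι) : IsScalarTower K R (X i).M := .of_compHom K R _
  have (i : ι) : Module.Finite K (X i).M := .trans R _
  have : IsScalarTower K S M := ⟨fun _ _ _ => rfl⟩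
  have hfin : Module.Finite S M := .of_restrictScalars_finite K S M
  have htop : (⊤ : Submodule S M) ≤ Ring.jacobson S • ⊤ := by
    intro m _
    have := Fintype.ofFinite ι
    rw [← Finset.univ_sum_single m]
    refine Submodule.sum_mem _ fun u _ => ?_
    obtain ⟨s, hs⟩ := hseq u
    have hsu : s.r.Iso (X u) := hs ▸ ⟨LinearEquiv.refl R s.r.M⟩
    exact single_mem_jacobson_smul_top hX hsu (hclosed u) (m u)
  have hbot : (⊤ : Submodule S M) = ⊥ := hfin.fg_top.eq_bot_of_le_jacobson_smul htop
  obtain ⟨u⟩ := ‹Nonempty ι›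
  have := (hX u).1
  obtain ⟨x, hx⟩ := exists_ne (0 : (X u).M)
  have hmem : (Pi.single u x : M) ∈ (⊤ : Submodule S M) := trivial
  rw [hbot, Submodule.mem_bot, Pi.single_eq_zero_iff] at hmem
  exact hx hmem

end Nakayama

section Predecessors

open Relation

variable {V : Type*} {A T : V → V → Prop} {Γ : Set V}

theorem transGen_mem_of_transGen
    (hclosed : ∀ x ∈ Γ, ∀ y, TransGen A y y → A x y ∨ A y x → y ∈ Γ) {x y : V}
    (hxy : TransGen A x y) (hyx : ReflTransGen A y x) (hx : x ∈ Γ) :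
    TransGen (fun a b => a ∈ Γ ∧ b ∈ Γ ∧ A a b) x y := by
  induction hxy with
  | single h =>
    exact .single ⟨hx, hclosed x hx _ (.tail' hyx h) (.inl h), h⟩
  | tail hxb hbc ih =>
    have hxb' := ih (hyx.head hbc)
    obtain ⟨_, -, _, hb, -⟩ := TransGen.tail'_iff.1 hxb'
    have hcc := TransGen.tail' (hyx.trans hxb.to_reflTransGen) hbc
    exact hxb'.tail ⟨hb, hclosed _ hb _ hcc (.inl hbc), hbc⟩

-- Twice applying the hypothesis on `T` carries an arrow `a → b` to `τ a → τ b`, so `τ` carries the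
-- cycle through a vertex of `Γ` to a cycle through its translate.
theorem exists_mem_rel (hT : ∀ a b z, T a b → A z b → A a z)
    (hcycle : ∀ x ∈ Γ, TransGen A x x)
    (hclosed : ∀ x ∈ Γ, ∀ y, TransGen A y y → A x y ∨ A y x → y ∈ Γ)
    (hex : ∀ x ∈ Γ, ∃ a, T a x) {x : V} (hx : x ∈ Γ) : ∃ a ∈ Γ, T a x := by
  have : Nonempty V := ⟨x⟩
  choose! t ht using hex
  have hcycle' := transGen_mem_of_transGen hclosed (hcycle x hx) .refl hx
  have htx : TransGen A (t x) (t x) := hcycle'.lift t fun a b ⟨ha, hb, hab⟩ =>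
    hT _ _ _ (ht a ha) (hT _ _ _ (ht b hb) hab)
  obtain ⟨z, -, hz, -, hzx⟩ := TransGen.tail'_iff.1 hcycle'
  exact ⟨t x, hclosed z hz (t x) htx (.inr (hT _ _ _ (ht x hx) hzx)), ht x hx⟩

theorem exists_predecessor_closed_subset (hT : ∀ a b z, T a b → A z b → A a z)
    (hcycle : ∀ x ∈ Γ, TransGen A x x)
    (hclosed : ∀ x ∈ Γ, ∀ y, TransGen A y y → A x y ∨ A y x → y ∈ Γ)
    (hex : ∀ x ∈ Γ, ∃ a, T a x) (hne : Γ.Nonempty) (hfin : Γ.Finite) :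
    ∃ U ⊆ Γ, U.Nonempty ∧ ∀ x ∈ U, ∀ z, A z x → z ∈ U := by
  let _ : Preorder V :=
    { le := ReflTransGen A
      le_refl _ := .refl
      le_trans _ _ _ := .trans }
  obtain ⟨m, hm⟩ := hfin.exists_minimal hne
  refine ⟨{x | Minimal (· ∈ Γ) x}, fun x hx => hx.1, ⟨m, hm⟩, fun x hx z hzx => ?_⟩
  obtain ⟨a, ha, hax⟩ := exists_mem_rel hT hcycle hclosed hex hx.1
  have haz := hT a x z hax hzx
  have hxa : ReflTransGen A x a := hx.2 ha (.head haz (.single hzx))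
  have hz : z ∈ Γ := hclosed x hx.1 z (.head' hzx (hxa.tail haz)) (.inr hzx)
  exact ⟨hz, fun y hy hyz => (hx.2 hy (hyz.tail hzx)).head hzx⟩

end Predecessors

section InjectiveHull

variable {R : Type u} [Ring R] {I : Type u} [AddCommGroup I] [Module R I]

theorem exists_le_maximal_disjoint {N C : Submodule R I} (h : Disjoint N C) :
    ∃ E, N ≤ E ∧ Maximal (Disjoint · C) E := by
  refine zorn_le_nonempty₀ {E | Disjoint E C} (fun c hc hchain y hy => ?_) N h
  refine ⟨sSup c, ?_, fun z hz => le_sSup hz⟩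
  rw [Set.mem_ofPred_eq, Submodule.disjoint_def]
  intro x hx hxC
  obtain ⟨F, hF, hxF⟩ := (Submodule.mem_sSup_of_directed ⟨y, hy⟩ hchain.directedOn).1 hx
  exact Submodule.disjoint_def.1 (hc hF) x hxF hxC

theorem isCompl_of_maximal_disjoint [Module.Injective R I] {E C : Submodule R I}
    (hE : Maximal (Disjoint · C) E) (hC : Maximal (Disjoint · E) C) : IsCompl E C := by
  have hinj : Function.Injective (C.mkQ ∘ₗ E.subtype) := by
    rw [← LinearMap.ker_eq_bot, LinearMap.ker_comp, Submodule.ker_mkQ,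
      ← Submodule.disjoint_iff_comap_eq_bot]
    exact hE.1
  obtain ⟨b, hb⟩ := Module.Injective.extension_property R _ _ _ _ hinj E.subtype
  have hbE : ∀ x ∈ E, b (C.mkQ x) = x := fun x hx => LinearMap.congr_fun hb ⟨x, hx⟩
  have hCb : ∀ x ∈ C, b (C.mkQ x) = 0 := fun x hx => by
    rw [Submodule.mkQ_apply, (Submodule.Quotient.mk_eq_zero C).2 hx, map_zero]
  have hbC : C.comap (b ∘ₗ C.mkQ) ≤ C := by
    refine hC.2 (Submodule.disjoint_def.2 fun x hx hxE => ?_) fun x hx => ?_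
    · rw [Submodule.mem_comap, LinearMap.comp_apply, hbE x hxE] at hx
      exact Submodule.disjoint_def.1 hE.1 x hxE hx
    · rw [Submodule.mem_comap, LinearMap.comp_apply, hCb x hx]
      exact C.zero_mem
  have hrange : LinearMap.range (b ∘ₗ C.mkQ) ≤ E := by
    refine hE.2 (Submodule.disjoint_def.2 ?_) fun x hx => ⟨x, hbE x hx⟩
    rintro _ ⟨x, rfl⟩ hx
    exact hCb x (hbC hx)
  refine ⟨hE.1, codisjoint_iff.2 (Submodule.eq_top_iff'.2 fun x => ?_)⟩
  have hxE : b (C.mkQ x) ∈ E := hrange ⟨x, rfl⟩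
  refine Submodule.mem_sup.2 ⟨b (C.mkQ x), hxE, x - b (C.mkQ x), hbC ?_, add_sub_cancel _ _⟩
  rw [Submodule.mem_comap, LinearMap.comp_apply, map_sub, map_sub, hbE _ hxE, sub_self]
  exact C.zero_mem

theorem exists_isCompl_essential [Module.Injective R I] (N : Submodule R I) :
    ∃ E C : Submodule R I, IsCompl E C ∧ N ≤ E ∧ ∀ F ≤ E, Disjoint N F → F = ⊥ := by
  obtain ⟨C, -, hC⟩ := exists_le_maximal_disjoint (disjoint_bot_left (a := N))
  obtain ⟨E, hNE, hE⟩ := exists_le_maximal_disjoint hC.1.symm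
  have hC' : Maximal (Disjoint · E) C :=
    ⟨hE.1.symm, fun F hF hCF => hC.2 (hF.mono_right hNE) hCF⟩
  refine ⟨E, C, isCompl_of_maximal_disjoint hE hC', hNE, fun F hFE hNF => ?_⟩
  have hNFC : Disjoint N (F ⊔ C) :=
    hNF.disjoint_sup_right_of_disjoint_sup_left (hE.1.mono_left (sup_le hNE hFE))
  exact disjoint_self.1 (hE.1.mono hFE (le_sup_left.trans (hC.2 hNFC.symm le_sup_right)))

theorem injective_of_isCompl [Module.Injective R I] {E C : Submodule R I}
    (h : IsCompl E C) : Module.Injective R E where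
  out X Y _ _ _ _ f hf g := by
    obtain ⟨k, hk⟩ := Module.Injective.out f hf (E.subtype ∘ₗ g)
    refine ⟨E.projectionOnto C h ∘ₗ k, fun x => ?_⟩
    rw [LinearMap.comp_apply, hk]
    exact Submodule.projectionOnto_apply_left h (g x)

theorem exists_injective_essential (N : Type u) [AddCommGroup N] [Module R N] :
    ∃ (E : Type u) (_ : AddCommGroup E) (_ : Module R E) (j : N →ₗ[R] E), Module.Injective R E ∧
      Function.Injective j ∧ ∀ F : Submodule R E, Disjoint (LinearMap.range j) F → F = ⊥ := by
  let P := (CategoryTheory.EnoughInjectives.presentation (ModuleCat.of R N)).some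
  have := P.injective
  have : Module.Injective R P.J := Module.injective_module_of_injective_object R P.J
  have hP : Function.Injective P.f.hom := (ModuleCat.mono_iff_injective P.f).1 P.mono
  obtain ⟨E, C, hEC, hle, hess⟩ := exists_isCompl_essential (LinearMap.range P.f.hom)
  refine ⟨E, inferInstance, inferInstance, P.f.hom.codRestrict E fun x => hle ⟨x, rfl⟩,
    injective_of_isCompl hEC, fun x y hxy => hP (congrArg Subtype.val hxy),
    fun F hF => ?_⟩
  apply Submodule.map_injective_of_injective E.subtype_injective
  rw [Submodule.map_bot]
  refine hess _ (Submodule.map_subtype_le E F) (Submodule.disjoint_def.2 ?_)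
  rintro _ ⟨x, rfl⟩ ⟨y, hy, hyx⟩
  have := Submodule.disjoint_def.1 hF y ⟨x, Subtype.ext hyx.symm⟩ hy
  rw [← hyx, this, map_zero]

end InjectiveHull

section Dualizing

/-- `E` is a dualizing module over the commutative ring `K`: it is injective, and `Hom(-, E)`
preserves the length of simple modules. Then `Hom(-, E)` is a duality on finite length modules. -/
structure IsDualizing (K E : Type u) [CommRing K] [AddCommGroup E] [Module K E] : Prop where
  injective : Module.Injective K E
  length_hom : ∀ (S : Type u) [AddCommGroup S] [Module K S] [IsSimpleModule K S],
    Module.length K (S →ₗ[K] E) = 1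

variable {K : Type u} [CommRing K]

theorem eq_zero_of_smul_eq_zero_of_notMem {m : Ideal K} [m.IsPrime] {r : K} (hr : r ∉ m)
    {y : K ⧸ m} (hy : r • y = 0) : y = 0 := by
  rw [Algebra.smul_def, mul_eq_zero] at hy
  exact hy.resolve_left fun h => hr (Ideal.Quotient.eq_zero_iff_mem.1 h)

theorem exists_eq_single_of_smul_eq_zero [DecidableEq (MaximalSpectrum K)] (m : MaximalSpectrum K)
    {n : ∀ m : MaximalSpectrum K, K ⧸ m.asIdeal} (hn : ∀ r ∈ m.asIdeal, r • n = 0) :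
    ∃ y, Pi.single m y = n := by
  refine ⟨n m, funext fun m' => ?_⟩
  obtain rfl | hne := eq_or_ne m' m
  · exact Pi.single_eq_same _ _
  rw [Pi.single_eq_of_ne hne]
  obtain ⟨r, hr, hr'⟩ := SetLike.not_le_iff_exists.1 fun h : m.asIdeal ≤ m'.asIdeal =>
    hne (MaximalSpectrum.ext (m.isMaximal.eq_of_le m'.isMaximal.ne_top h).symm)
  exact (eq_zero_of_smul_eq_zero_of_notMem hr' (congrFun (hn r hr) m')).symm

theorem range_le_of_essential {R S N E : Type*} [Ring R] [AddCommGroup S] [AddCommGroup N]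
    [AddCommGroup E] [Module R S] [Module R N] [Module R E] [IsSimpleModule R S] {j : N →ₗ[R] E}
    (hj : ∀ F : Submodule R E, Disjoint (LinearMap.range j) F → F = ⊥) (a : S →ₗ[R] E) :
    LinearMap.range a ≤ LinearMap.range j := by
  obtain ha | rfl := a.injective_or_eq_zero
  · have : IsSimpleModule R (LinearMap.range a) := .congr (LinearEquiv.ofInjective a ha).symm
    have hatom := isSimpleModule_iff_isAtom.1 this
    exact hatom.not_disjoint_iff_le.1 fun h => hatom.1 (hj _ h.symm)
  · rw [LinearMap.range_zero]
    exact bot_le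

theorem length_hom_quotient_eq_one {E : Type u} [AddCommGroup E] [Module K E]
    {j : (∀ m : MaximalSpectrum K, K ⧸ m.asIdeal) →ₗ[K] E} (hj : Function.Injective j)
    (hess : ∀ F : Submodule K E, Disjoint (LinearMap.range j) F → F = ⊥) (m : MaximalSpectrum K) :
    Module.length K ((K ⧸ m.asIdeal) →ₗ[K] E) = 1 := by
  classical
  have hsimple : IsSimpleModule K (K ⧸ m.asIdeal) := isSimpleModule_iff_isCoatom.2 m.isMaximal.out
  let jm : (K ⧸ m.asIdeal) →ₗ[K] E :=
    j ∘ₗ LinearMap.single K (fun m : MaximalSpectrum K => K ⧸ m.asIdeal) m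
  let ev : ((K ⧸ m.asIdeal) →ₗ[K] E) →ₗ[K] E := LinearMap.applyₗ (Ideal.Quotient.mk m.asIdeal 1)
  have hev : Function.Injective ev := fun a b hab =>
    Submodule.linearMap_qext _ (LinearMap.ext_ring hab)
  have hrange : LinearMap.range ev ≤ LinearMap.range jm := by
    rintro _ ⟨a, rfl⟩
    obtain ⟨n, hn⟩ := range_le_of_essential hess a ⟨1, rfl⟩
    obtain ⟨y, rfl⟩ := exists_eq_single_of_smul_eq_zero m (n := n) fun r hr => hj <| by
      rw [map_smul, hn, ← map_smul, map_zero, Algebra.smul_def, mul_one,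
        Ideal.Quotient.algebraMap_eq, Ideal.Quotient.eq_zero_iff_mem.2 hr, map_zero]
    exact ⟨y, hn⟩
  have hjm : jm ≠ 0 := fun h => by
    simpa [jm, map_eq_zero_iff j hj] using LinearMap.congr_fun h 1
  have : Nontrivial ((K ⧸ m.asIdeal) →ₗ[K] E) := ⟨jm, 0, hjm⟩
  refine le_antisymm ?_ (Order.one_le_iff_ne_zero.2 Module.length_pos.ne')
  calc Module.length K ((K ⧸ m.asIdeal) →ₗ[K] E)
    _ ≤ Module.length K (LinearMap.range jm) := Module.length_le_of_injective
        (ev.codRestrict _ fun a => hrange ⟨a, rfl⟩) fun a b h => hev (congrArg Subtype.val h)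
    _ ≤ Module.length K (K ⧸ m.asIdeal) :=
        Module.length_le_of_surjective jm.rangeRestrict jm.surjective_rangeRestrict
    _ = 1 := Module.length_eq_one K _

theorem exists_isDualizing (K : Type u) [CommRing K] :
    ∃ (E : Type u) (_ : AddCommGroup E) (_ : Module K E), IsDualizing K E := by
  obtain ⟨E, _, _, j, hE, hj, hess⟩ :=
    exists_injective_essential (R := K) (∀ m : MaximalSpectrum K, K ⧸ m.asIdeal)
  refine ⟨E, inferInstance, inferInstance, hE, fun S _ _ _ => ?_⟩
  obtain ⟨m, hm, ⟨e⟩⟩ := isSimpleModule_iff_quot_maximal.1 ‹IsSimpleModule K S›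
  rw [(e.congrLeft E K).length_eq]
  exact length_hom_quotient_eq_one hj hess ⟨m, hm⟩

theorem length_le_add_of_exact {R A B C : Type*} [Ring R] [AddCommGroup A] [AddCommGroup B]
    [AddCommGroup C] [Module R A] [Module R B] [Module R C] {f : A →ₗ[R] B} {g : B →ₗ[R] C}
    (h : Function.Exact f g) : Module.length R B ≤ Module.length R A + Module.length R C := by
  rw [Module.length_eq_add_of_exact (LinearMap.ker g).subtype g.rangeRestrict
    (Submodule.subtype_injective _) g.surjective_rangeRestrict
    (LinearMap.exact_iff.2 (by rw [LinearMap.ker_rangeRestrict, Submodule.range_subtype])),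
    h.linearMap_ker_eq]
  exact add_le_add (Module.length_le_of_surjective _ f.surjective_rangeRestrict)
    (Module.length_le_of_injective _ (Submodule.subtype_injective _))

namespace IsDualizing

variable {E : Type u} [AddCommGroup E] [Module K E] {M N : Type u}
  [AddCommGroup M] [AddCommGroup N] [Module K M] [Module K N]

theorem exists_comp_eq (hE : IsDualizing K E) {i : M →ₗ[K] N} (hi : Function.Injective i)
    (g : M →ₗ[K] E) : ∃ h : N →ₗ[K] E, h ∘ₗ i = g :=
  have := hE.injective
  Module.Injective.extension_property K _ _ _ i hi g

theorem exists_comp_eq_of_ker_le (hE : IsDualizing K E) {T : M →ₗ[K] N} {g : M →ₗ[K] E}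
    (h : LinearMap.ker T ≤ LinearMap.ker g) : ∃ l : N →ₗ[K] E, l ∘ₗ T = g := by
  obtain ⟨c, hc⟩ := _root_.exists_comp_eq_of_ker_le T.surjective_rangeRestrict
    (h := g) (by rwa [LinearMap.ker_rangeRestrict])
  obtain ⟨l, hl⟩ := hE.exists_comp_eq (Submodule.subtype_injective (LinearMap.range T)) c
  exact ⟨l, by rw [← hc, ← hl]; rfl⟩

theorem exists_apply_ne_zero (hE : IsDualizing K E) {x : M} (hx : x ≠ 0) :
    ∃ g : M →ₗ[K] E, g x ≠ 0 := by
  let t := LinearMap.toSpanSingleton K M x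
  have hne : LinearMap.ker t ≠ ⊤ := fun h => hx <| by
    simpa [t] using LinearMap.congr_fun (LinearMap.ker_eq_top.1 h) 1
  obtain ⟨m, hm, hle⟩ := Ideal.exists_le_maximal (LinearMap.ker t) hne
  have : IsSimpleModule K (K ⧸ m) := isSimpleModule_iff_isCoatom.2 hm.out
  have : Nontrivial ((K ⧸ m) →ₗ[K] E) := by
    rw [← Module.length_pos_iff (R := K), hE.length_hom]
    exact one_pos
  obtain ⟨a, ha⟩ := exists_ne (0 : (K ⧸ m) →ₗ[K] E)
  obtain ⟨g, hg⟩ := hE.exists_comp_eq_of_ker_le (T := t) (g := a ∘ₗ Submodule.mkQ m) <|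
    hle.trans fun r hr => by simp [Ideal.Quotient.eq_zero_iff_mem.2 hr]
  refine ⟨g, fun h => ha ?_⟩
  ext
  simpa [t, h] using (LinearMap.congr_fun hg 1).symm

theorem length_hom_le (hE : IsDualizing K E) (hM : IsFiniteLength K M) :
    Module.length K (M →ₗ[K] E) ≤ Module.length K M := by
  induction hM with
  | @of_subsingleton M _ _ _ =>
    rw [Module.length_eq_zero]
    exact zero_le
  | @of_simple_quotient M _ _ N _ _ ih =>
    have hexact := LinearMap.exact_lcomp_of_exact_of_surjective E
      (LinearMap.exact_subtype_mkQ N) N.mkQ_surjective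
    calc Module.length K (M →ₗ[K] E)
      _ ≤ Module.length K ((M ⧸ N) →ₗ[K] E) + Module.length K (N →ₗ[K] E) :=
          length_le_add_of_exact hexact
      _ ≤ Module.length K (M ⧸ N) + Module.length K N := by
          rw [hE.length_hom, Module.length_eq_one K (M ⧸ N)]
          gcongr
      _ = Module.length K M := by
          rw [add_comm, Module.length_eq_add_of_exact N.subtype N.mkQ N.subtype_injective
            N.mkQ_surjective (LinearMap.exact_subtype_mkQ N)]

theorem isFiniteLength_hom (hE : IsDualizing K E) (hM : IsFiniteLength K M) :
    IsFiniteLength K (M →ₗ[K] E) :=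
  Module.length_ne_top_iff.1
    (ne_top_of_le_ne_top (Module.length_ne_top_iff.2 hM) (hE.length_hom_le hM))

theorem exists_eq_apply (hE : IsDualizing K E) (hM : IsFiniteLength K M)
    (Φ : (M →ₗ[K] E) →ₗ[K] E) : ∃ x, ∀ g, Φ g = g x := by
  let ev : M →ₗ[K] ((M →ₗ[K] E) →ₗ[K] E) := LinearMap.applyₗ
  have hev : Function.Injective ev := (injective_iff_map_eq_zero _).2 fun x hx => by
    by_contra h
    obtain ⟨g, hg⟩ := hE.exists_apply_ne_zero h
    exact hg (LinearMap.congr_fun hx g)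
  have hM' := hE.isFiniteLength_hom hM
  have hle := (hE.length_hom_le hM').trans (hE.length_hom_le hM)
  obtain ⟨_, _⟩ := isFiniteLength_iff_isNoetherian_isArtinian.1 (hE.isFiniteLength_hom hM')
  have hrange : LinearMap.range ev = ⊤ := by
    by_contra h
    refine ((Submodule.length_lt h).trans_le hle).not_ge ?_
    exact (LinearEquiv.ofInjective ev hev).length_eq.le
  obtain ⟨x, hx⟩ := LinearMap.range_eq_top.1 hrange Φ
  exact ⟨x, fun g => (LinearMap.congr_fun hx g).symm⟩

end IsDualizing

end Dualizing

section Coinduced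

variable {K R E Q : Type*} [CommRing K] [Ring R] [Algebra K R] [AddCommGroup E] [Module K E]
  [AddCommGroup Q] [Module K Q] [Module R Q]

variable (R) in
/-- `ε : Q → E` makes the `R`-module `Q` coinduced from the `K`-module `E`: the `R`-linear maps into
`Q` correspond under composition with `ε` to the `K`-linear maps into `E`. It suffices to demand
this for maps from `R`. -/
def IsCoinduced (ε : Q →ₗ[K] E) : Prop :=
  ∀ l : R →ₗ[K] E, ∃! q : Q, ∀ r, ε (r • q) = l r

namespace IsCoinduced

variable [IsScalarTower K R Q] {ε : Q →ₗ[K] E}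

theorem ext (hε : IsCoinduced R ε) {p q : Q} (h : ∀ r : R, ε (r • p) = ε (r • q)) : p = q :=
  (hε (ε ∘ₗ (LinearMap.toSpanSingleton R Q q).restrictScalars K)).unique h fun _ => rfl

theorem exists_apply_eq {M : Type*} [AddCommGroup M] [Module K M] [Module R M]
    [IsScalarTower K R M] (hε : IsCoinduced R ε) (l : M →ₗ[K] E) :
    ∃ F : M →ₗ[R] Q, ∀ x, ε (F x) = l x := by
  choose F hF using fun x =>
    (hε (l ∘ₗ (LinearMap.toSpanSingleton R M x).restrictScalars K)).exists
  simp only [LinearMap.comp_apply, LinearMap.restrictScalars_apply,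
    LinearMap.toSpanSingleton_apply] at hF
  exact
    ⟨{  toFun := F
        map_add' := fun x y => hε.ext fun r => by
          rw [smul_add, map_add, hF, hF, hF, smul_add, map_add]
        map_smul' := fun s x => hε.ext fun r => by
          rw [RingHom.id_apply, ← mul_smul, hF, hF, mul_smul] },
      fun x => by simpa using hF x 1⟩

end IsCoinduced

end Coinduced

section AlgebraDual

open MulOpposite

/-- The `K`-dual `Hom(R, E)` of a `K`-algebra `R` with values in `E`, as an `R`-bimodule: the left
action is `(r • q) s = q (s * r)`, and the right action, encoded as a left action of `Rᵐᵒᵖ`, is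
`(op r • q) s = q (r * s)`. -/
def AlgebraDual (K R E : Type*) [CommRing K] [Ring R] [Algebra K R] [AddCommGroup E]
    [Module K E] : Type _ :=
  R →ₗ[K] E

namespace AlgebraDual

variable {K R E : Type*} [CommRing K] [Ring R] [Algebra K R] [AddCommGroup E] [Module K E]

instance : AddCommGroup (AlgebraDual K R E) := inferInstanceAs (AddCommGroup (R →ₗ[K] E))

instance : Module K (AlgebraDual K R E) := inferInstanceAs (Module K (R →ₗ[K] E))

instance : FunLike (AlgebraDual K R E) R E := inferInstanceAs (FunLike (R →ₗ[K] E) R E)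

instance : LinearMapClass (AlgebraDual K R E) K R E :=
  inferInstanceAs (LinearMapClass (R →ₗ[K] E) K R E)

@[ext]
theorem ext {p q : AlgebraDual K R E} (h : ∀ s, p s = q s) : p = q := LinearMap.ext h

instance : Module R (AlgebraDual K R E) where
  smul r q := LinearMap.comp q (LinearMap.mulRight K r)
  one_smul q := ext fun s => congrArg q (mul_one s)
  mul_smul r r' q := ext fun s => congrArg q (mul_assoc s r r').symm
  smul_zero _ := rfl
  smul_add _ _ _ := rfl
  add_smul r r' q := ext fun s => (congrArg q (mul_add s r r')).trans (map_add q _ _)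
  zero_smul q := ext fun s => (congrArg q (mul_zero s)).trans (map_zero q)

instance : Module Rᵐᵒᵖ (AlgebraDual K R E) where
  smul r q := LinearMap.comp q (LinearMap.mulLeft K r.unop)
  one_smul q := ext fun s => congrArg q (one_mul s)
  mul_smul r r' q := ext fun s => congrArg q (mul_assoc r'.unop r.unop s)
  smul_zero _ := rfl
  smul_add _ _ _ := rfl
  add_smul r r' q := ext fun s => (congrArg q (add_mul r.unop r'.unop s)).trans (map_add q _ _)
  zero_smul q := ext fun s => (congrArg q (zero_mul s)).trans (map_zero q)

instance : SMulCommClass R Rᵐᵒᵖ (AlgebraDual K R E) where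
  smul_comm r r' q := ext fun s => congrArg q (mul_assoc r'.unop s r).symm

instance : SMulCommClass Rᵐᵒᵖ R (AlgebraDual K R E) := .symm _ _ _

instance : IsScalarTower K R (AlgebraDual K R E) where
  smul_assoc k r q := ext fun s =>
    (congrArg q (mul_smul_comm k s r)).trans (map_smul q k (s * r))

instance : IsScalarTower K Rᵐᵒᵖ (AlgebraDual K R E) where
  smul_assoc k r q := ext fun s =>
    (congrArg q (smul_mul_assoc k r.unop s)).trans (map_smul q k (r.unop * s))

variable (K R E) in
/-- Evaluation at `1`, the map through which `AlgebraDual K R E` is coinduced from `E` on either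
side. -/
def evalOne : AlgebraDual K R E →ₗ[K] E := LinearMap.applyₗ (1 : R)

theorem evalOne_smul (r : R) (q : AlgebraDual K R E) : evalOne K R E (r • q) = q r :=
  congrArg q (one_mul r)

theorem evalOne_op_smul (r : R) (q : AlgebraDual K R E) : evalOne K R E (op r • q) = q r :=
  congrArg q (mul_one r)

theorem isCoinduced_evalOne : IsCoinduced R (evalOne K R E) := fun l =>
  ⟨l, fun r => evalOne_smul r _, fun q hq => ext fun r => (evalOne_smul r q).symm.trans (hq r)⟩

theorem isCoinduced_op_evalOne : IsCoinduced Rᵐᵒᵖ (evalOne K R E) := fun l =>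
  ⟨l ∘ₗ (opLinearEquiv K).toLinearMap, fun r => evalOne_op_smul r.unop _,
    fun q hq => ext fun r => (evalOne_op_smul r q).symm.trans (hq (op r))⟩

end AlgebraDual

end AlgebraDual

section AlmostSplitSequences

variable {K R E : Type u} [CommRing K] [Ring R] [Algebra K R] [AddCommGroup E] [Module K E]

open MulOpposite

theorem exists_finite_presentation (R M : Type*) [Ring R] [IsNoetherianRing R] [AddCommGroup M]
    [Module R M] [Module.Finite R M] :
    ∃ (n m : ℕ) (x : Fin n → M) (ρ : Matrix (Fin m) (Fin n) R), Submodule.span R (Set.range x) = ⊤ ∧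
      (∀ j, ∑ i, ρ j i • x i = 0) ∧
      ∀ (N : Type u) [AddCommGroup N] [Module R N] (z : Fin n → N),
        (∀ j, ∑ i, ρ j i • z i = 0) → ∃ v : M →ₗ[R] N, ∀ i, v (x i) = z i := by
  obtain ⟨n, x, hx⟩ := Submodule.fg_iff_exists_fin_generating_family.1
    (Module.Finite.fg_top (R := R) (M := M))
  let π := Fintype.linearCombination R x
  obtain ⟨m, ρ, hρ⟩ := Submodule.fg_iff_exists_fin_generating_family.1
    (IsNoetherian.noetherian (LinearMap.ker π))
  refine ⟨n, m, x, ρ, hx, fun j => ?_, fun N _ _ z hz => ?_⟩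
  · have hj : ρ j ∈ LinearMap.ker π := hρ ▸ Submodule.subset_span ⟨j, rfl⟩
    exact hj
  have hker : LinearMap.ker π ≤ LinearMap.ker (Fintype.linearCombination R z) := by
    rw [← hρ, Submodule.span_le]
    rintro _ ⟨j, rfl⟩
    exact hz j
  have hπ : Function.Surjective π := by
    rw [← LinearMap.range_eq_top, Fintype.range_linearCombination, hx]
  obtain ⟨v, hv⟩ := exists_comp_eq_of_ker_le hπ hker
  refine ⟨v, fun i => ?_⟩
  simpa [π, Fintype.linearCombination_apply_single] using LinearMap.congr_fun hv (Pi.single i 1)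

namespace AlgebraDual

variable {ι κ : Type} [Fintype κ]

/-- Right multiplication by a matrix over `R` on vectors over the bimodule `AlgebraDual K R E`. It
is the dual of left multiplication by the matrix, that is, the Nakayama functor applied to the
corresponding map of free modules. -/
def vecMulLinear (K E : Type u) [CommRing K] [Algebra K R] [AddCommGroup E] [Module K E]
    (ρ : Matrix κ ι R) : (κ → AlgebraDual K R E) →ₗ[R] (ι → AlgebraDual K R E) :=
  LinearMap.pi fun i => ∑ j, op (ρ j i) • LinearMap.proj j

theorem evalOne_smul_vecMulLinear (ρ : Matrix κ ι R) (q : κ → AlgebraDual K R E) (i : ι) (s : R) :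
    evalOne K R E (s • vecMulLinear K E ρ q i) = ∑ j, evalOne K R E ((ρ j i * s) • q j) := by
  simp only [vecMulLinear, LinearMap.pi_apply, LinearMap.sum_apply, LinearMap.smul_apply,
    LinearMap.proj_apply, Finset.smul_sum, map_sum]
  refine Finset.sum_congr rfl fun j _ => ?_
  rw [smul_comm, evalOne_op_smul, mul_smul, evalOne_smul]

theorem sum_evalOne_vecMulLinear_eq_zero [Fintype ι] {Z : Type*} [AddCommGroup Z] [Module R Z]
    (ρ : Matrix κ ι R) (F : Z →ₗ[R] κ → AlgebraDual K R E) {z : ι → Z}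
    (hz : ∀ j, ∑ i, ρ j i • z i = 0) :
    ∑ i, evalOne K R E (vecMulLinear K E ρ (F (z i)) i) = 0 :=
  calc
    ∑ i, evalOne K R E (vecMulLinear K E ρ (F (z i)) i)
      = ∑ i, ∑ j, evalOne K R E (F (ρ j i • z i) j) := by
        refine Finset.sum_congr rfl fun i _ => ?_
        simpa using evalOne_smul_vecMulLinear ρ (F (z i)) i 1
    _ = ∑ j, evalOne K R E (F (∑ i, ρ j i • z i) j) := by
        rw [Finset.sum_comm]
        simp only [map_sum, Finset.sum_apply]
    _ = 0 := by simp [hz]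

theorem exists_vecMulLinear_comp_eq (hE : IsDualizing K E) [Fintype ι] {Z : Type u}
    [AddCommGroup Z] [Module K Z] [Module R Z] [IsScalarTower K R Z] (ρ : Matrix κ ι R)
    (Θ : Z →ₗ[R] ι → AlgebraDual K R E)
    (hΘ : ∀ z : ι → Z, (∀ j, ∑ i, ρ j i • z i = 0) → ∑ i, evalOne K R E (Θ (z i) i) = 0) :
    ∃ F, vecMulLinear K E ρ ∘ₗ F = Θ := by
  classical
  let T : (ι → Z) →ₗ[K] κ → Z :=
    (LinearMap.pi fun j => ∑ i, Module.toModuleEnd K (S := R) Z (ρ j i) ∘ₗ LinearMap.proj i)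
  let g : (ι → Z) →ₗ[K] E := ∑ i,
    evalOne K R E ∘ₗ (LinearMap.proj i ∘ₗ Θ).restrictScalars K ∘ₗ LinearMap.proj i
  have hT (z : ι → Z) (j : κ) : T z j = ∑ i, ρ j i • z i := by simp [T]
  have hg (z : ι → Z) : g z = ∑ i, evalOne K R E (Θ (z i) i) := by simp [g]
  obtain ⟨l, hl⟩ : ∃ l : (κ → Z) →ₗ[K] E, l ∘ₗ T = g :=
    hE.exists_comp_eq_of_ker_le fun z hz =>
      (hg z).trans (hΘ z fun j => (hT z j).symm.trans (congrFun hz j))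
  choose F hF using fun j => isCoinduced_evalOne.exists_apply_eq (R := R)
    (l ∘ₗ LinearMap.single K (fun _ : κ => Z) j)
  refine ⟨LinearMap.pi F, LinearMap.ext fun z => funext fun i =>
    isCoinduced_evalOne.ext fun s => ?_⟩
  calc evalOne K R E (s • vecMulLinear K E ρ (LinearMap.pi F z) i)
    _ = ∑ j, l (Pi.single j ((ρ j i * s) • z)) := by
        rw [evalOne_smul_vecMulLinear]
        simp only [LinearMap.pi_apply, ← map_smul, hF, LinearMap.comp_apply,
          LinearMap.single_apply]
    _ = l (T (Pi.single i (s • z))) := by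
        rw [← map_sum, Finset.univ_sum_single]
        congr 1
        ext j
        simp [hT, Pi.single_apply, mul_smul]
    _ = g (Pi.single i (s • z)) := LinearMap.congr_fun hl _
    _ = evalOne K R E (s • Θ z i) := by
        rw [hg, Finset.sum_eq_single i (by simp +contextual) (by simp), Pi.single_eq_same, map_smul,
          Pi.smul_apply]

theorem isNoetherian_and_isArtinian (hE : IsDualizing K E) [IsArtinianRing K] [Module.Finite K R] :
    IsNoetherian R (AlgebraDual K R E) ∧ IsArtinian R (AlgebraDual K R E) := by
  have hR : IsFiniteLength K R :=
    isFiniteLength_iff_isNoetherian_isArtinian.2 ⟨inferInstance, inferInstance⟩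
  obtain ⟨_, _⟩ := isFiniteLength_iff_isNoetherian_isArtinian.1 (hE.isFiniteLength_hom hR)
  exact ⟨isNoetherian_of_tower K ‹_›, isArtinian_of_tower K ‹_›⟩

end AlgebraDual

namespace ModA.IsIndec

open AlgebraDual

variable {X : ModA R}

theorem exists_apply_id_ne_zero (hE : IsDualizing K E) (hX : X.IsIndec) [Module K X.M]
    [IsScalarTower K R X.M] :
    ∃ φ : Module.End R X.M →ₗ[K] E, φ 1 ≠ 0 ∧
      ∀ h : Module.End R X.M, ¬Function.Bijective h → φ h = 0 := by
  have := hX.isLocalRing_end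
  let S : Submodule K (Module.End R X.M) :=
    { IsLocalRing.nonunitsAddSubmonoid (Module.End R X.M) with
      smul_mem' := fun k h hh hkh => hh <| by
        rw [Algebra.smul_def, (show Commute _ h from Algebra.commutes k h).isUnit_mul_iff] at hkh
        exact hkh.2 }
  have hone : S.mkQ 1 ≠ 0 := fun h => (Submodule.Quotient.mk_eq_zero S).1 h isUnit_one
  obtain ⟨g, hg⟩ := hE.exists_apply_ne_zero hone
  refine ⟨g ∘ₗ S.mkQ, hg, fun h hh => ?_⟩
  have hS : h ∈ S := fun hunit => hh ((Module.End.isUnit_iff h).1 hunit)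
  rw [LinearMap.comp_apply, Submodule.mkQ_apply, (Submodule.Quotient.mk_eq_zero S).2 hS, map_zero]

theorem exists_sum_evalOne_ne_zero (hE : IsDualizing K E) (hX : X.IsIndec) [Module K X.M]
    [IsScalarTower K R X.M] {ι : Type} [Fintype ι] {x : ι → X.M}
    (hx : Submodule.span R (Set.range x) = ⊤) :
    ∃ Ψ : X.M →ₗ[R] ι → AlgebraDual K R E, ∑ i, evalOne K R E (Ψ (x i) i) ≠ 0 ∧
      ∀ h : Module.End R X.M, ¬Function.Bijective h → ∑ i, evalOne K R E (Ψ (h (x i)) i) = 0 := by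
  classical
  obtain ⟨φ, hφ, hφ'⟩ := hX.exists_apply_id_ne_zero hE
  let ev : Module.End R X.M →ₗ[K] ι → X.M := LinearMap.pi fun i => LinearMap.applyₗ' K (x i)
  have hev : Function.Injective ev := fun h h' hh =>
    LinearMap.ext_on_range hx fun i => congrFun hh i
  obtain ⟨ψ, hψ⟩ := hE.exists_comp_eq hev φ
  choose Ψ hΨ using fun i => isCoinduced_evalOne.exists_apply_eq (R := R)
    (ψ ∘ₗ LinearMap.single K (fun _ : ι => X.M) i)
  have hsum (h : Module.End R X.M) :
      ∑ i, evalOne K R E (LinearMap.pi Ψ (h (x i)) i) = φ h := by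
    simp only [LinearMap.pi_apply, hΨ, LinearMap.comp_apply, LinearMap.single_apply]
    rw [← map_sum, Finset.univ_sum_single, ← hψ]
    rfl
  exact ⟨LinearMap.pi Ψ, fun h => hφ ((hsum 1).symm.trans h), fun h hh => (hsum h).trans (hφ' h hh)⟩

end ModA.IsIndec

theorem isRightAlmostSplit_pullback {X P P' : ModA R} {Ψ : X.M →ₗ[R] P.M} {d : P'.M →ₗ[R] P.M}
    (hΨ : ¬∃ F, d ∘ₗ F = Ψ)
    (hlift : ∀ (Z : ModA R) (h : Z.M →ₗ[R] X.M), ¬SplitEpiMap h → ∃ F, d ∘ₗ F = Ψ ∘ₗ h) :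
    IsRightAlmostSplit (M := ModA.of R (LinearMap.eqLocus
        (Ψ ∘ₗ LinearMap.fst R X.M P'.M) (d ∘ₗ LinearMap.snd R X.M P'.M)))
      (LinearMap.fst R X.M P'.M ∘ₗ Submodule.subtype _) := by
  refine ⟨?_, fun Z h hh => ?_⟩
  · rintro ⟨s, hs⟩
    refine hΨ ⟨LinearMap.snd R X.M P'.M ∘ₗ Submodule.subtype _ ∘ₗ s, LinearMap.ext fun y => ?_⟩
    exact (s y).2.symm.trans (congrArg Ψ (LinearMap.congr_fun hs y))
  · obtain ⟨F, hF⟩ := hlift Z h hh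
    exact ⟨(h.prod F).codRestrict _ fun z => (LinearMap.congr_fun hF z).symm, rfl⟩

variable (K) in
theorem exists_almostSplitSeq_of_not_projective [IsArtinianRing K] [Module.Finite K R]
    {X : ModA R} (hX : X.IsIndec) (hproj : ¬Module.Projective R X.M) :
    ∃ s : AlmostSplitSeq R, s.r = X := by
  obtain ⟨E, _, _, hE⟩ := exists_isDualizing K
  obtain ⟨_, _⟩ := AlgebraDual.isNoetherian_and_isArtinian hE (R := R)
  have : IsNoetherianRing R := isNoetherian_of_tower K inferInstance
  have : IsArtinianRing R := isArtinian_of_tower K inferInstance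
  let _ (Y : ModA R) : Module K Y.M := Module.compHom Y.M (algebraMap K R)
  have (Y : ModA R) : IsScalarTower K R Y.M := IsScalarTower.of_compHom K R Y.M
  obtain ⟨n, m, x, ρ, hx, hρ, hlift⟩ := exists_finite_presentation R X.M
  obtain ⟨Ψ, hΨ, hΨ'⟩ := hX.exists_sum_evalOne_ne_zero hE hx
  let d := AlgebraDual.vecMulLinear K E ρ
  refine (isRightAlmostSplit_pullback (P := ModA.of R (Fin n → AlgebraDual K R E))
    (P' := ModA.of R (Fin m → AlgebraDual K R E)) (Ψ := Ψ) (d := d) ?_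
    fun Z h hh => ?_).exists_almostSplitSeq hX hproj
  · rintro ⟨F, hF⟩
    refine hΨ ?_
    rw [← hF]
    exact AlgebraDual.sum_evalOne_vecMulLinear_eq_zero ρ F hρ
  · refine AlgebraDual.exists_vecMulLinear_comp_eq hE ρ _ fun z hz => ?_
    obtain ⟨v, hv⟩ := hlift Z.M z hz
    simpa [hv] using hΨ' (h ∘ₗ v) fun hb => hh (ModA.splitEpiMap_of_bijective_comp hb)

end AlmostSplitSequences

section ProjectiveVertex

theorem exists_isProjVertex_mem (K : Type u) {R : Type u} [CommRing K] [IsArtinianRing K] [Ring R]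
    [Algebra K R] [Module.Finite K R] {Γ : Set (ARVertex R)} (hcycle : ∀ x ∈ Γ, OnARCycle x)
    (hclosed : ∀ x ∈ Γ, ∀ y, OnARCycle y → ARStep x y → y ∈ Γ) (hne : Γ.Nonempty)
    (hfin : Γ.Finite) : ∃ x ∈ Γ, IsProjVertex x := by
  by_contra! hproj
  have hseq (X : IndecModA R) (hX : ARVertex.mk X ∈ Γ) : ∃ s : AlmostSplitSeq R, s.r = X.1 :=
    exists_almostSplitSeq_of_not_projective K X.2 fun h => hproj _ hX ⟨X, rfl, h⟩
  have htau : ∀ x ∈ Γ, ∃ a, TauRel a x := by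
    intro x hx
    obtain ⟨X, rfl⟩ := ARVertex.exists_mk_eq x
    obtain ⟨s, hs⟩ := hseq X hx
    exact ⟨.mk ⟨s.l, s.l_indec⟩, _, X, rfl, rfl, s, ⟨.refl R _⟩, hs ▸ ⟨.refl R _⟩⟩
  obtain ⟨U, hUΓ, hU, hpred⟩ := exists_predecessor_closed_subset (T := TauRel)
    (fun _ _ _ => ARVertex.arArrow_of_tauRel) hcycle hclosed htau hne hfin
  have : Finite U := hfin.subset hUΓ
  have : Nonempty U := hU.to_subtype
  choose X hX using fun x : U => ARVertex.exists_mk_eq x.1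
  obtain ⟨u, Z, f, hZ, hf, hZX⟩ := exists_isIrred_forall_not_iso K (fun x => (X x).2)
    fun x => hseq (X x) ((hX x).symm ▸ hUΓ x.2)
  have hZU : ARVertex.mk ⟨Z, hZ⟩ ∈ U := hpred u u.2 _ ⟨⟨Z, hZ⟩, X u, f, hf, rfl, hX u⟩
  exact hZX ⟨_, hZU⟩ (ARVertex.mk_eq_mk.1 (hX ⟨_, hZU⟩).symm)

end ProjectiveVertex

section Duality

/-- The bimodule `Q`, with both actions written on the left, defines one half of a duality between
`mod R` and `mod S`: `Hom_R(-, Q)` is exact, faithful, sends modules of finite length over `R` to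
modules of finite length over `S`, and evaluation maps every such module onto its double dual. -/
structure IsDualityBimodule (R S Q : Type u) [Ring R] [Ring S] [AddCommGroup Q] [Module R Q]
    [Module S Q] [SMulCommClass R S Q] : Prop where
  injective : Module.Injective R Q
  exists_apply_ne_zero (X : ModA R) {x : X.M} (hx : x ≠ 0) : ∃ g : X.M →ₗ[R] Q, g x ≠ 0
  isFiniteLength_hom (X : ModA R) : IsFiniteLength S (X.M →ₗ[R] Q)
  exists_eq_apply (X : ModA R) (Φ : (X.M →ₗ[R] Q) →ₗ[S] Q) : ∃ x, ∀ g, Φ g = g x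

theorem IsCoinduced.injective {K R Q E : Type u} [CommRing K] [Ring R] [Algebra K R]
    [AddCommGroup E] [Module K E] [AddCommGroup Q] [Module K Q] [Module R Q] [IsScalarTower K R Q]
    {ε : Q →ₗ[K] E} (hε : IsCoinduced R ε) (hE : IsDualizing K E) : Module.Injective R Q := by
  refine ⟨fun M N _ _ _ _ i hi g => ?_⟩
  let _ : Module K M := Module.compHom M (algebraMap K R)
  let _ : Module K N := Module.compHom N (algebraMap K R)
  have : IsScalarTower K R M := .of_compHom K R M
  have : IsScalarTower K R N := .of_compHom K R N
  obtain ⟨l, hl⟩ := hE.exists_comp_eq (i := i.restrictScalars K) hi (ε ∘ₗ g.restrictScalars K)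
  obtain ⟨F, hF⟩ := hε.exists_apply_eq l
  refine ⟨F, fun x => hε.ext fun r => ?_⟩
  rw [← map_smul, ← map_smul, hF, ← map_smul]
  exact LinearMap.congr_fun hl (r • x)

theorem IsDualizing.isDualityBimodule {K R S Q E : Type u} [CommRing K] [IsArtinianRing K] [Ring R]
    [Algebra K R] [Module.Finite K R] [Ring S] [Algebra K S] [AddCommGroup E] [Module K E]
    [AddCommGroup Q] [Module K Q] [Module R Q] [Module S Q] [SMulCommClass R S Q]
    [IsScalarTower K R Q] [IsScalarTower K S Q] (hE : IsDualizing K E) {ε : Q →ₗ[K] E}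
    (hR : IsCoinduced R ε) (hS : IsCoinduced S ε) : IsDualityBimodule R S Q := by
  let _ (X : ModA R) : Module K X.M := Module.compHom X.M (algebraMap K R)
  have (X : ModA R) : IsScalarTower K R X.M := .of_compHom K R X.M
  have hfin (X : ModA R) : IsFiniteLength K X.M :=
    have : Module.Finite K X.M := .trans R X.M
    isFiniteLength_iff_isNoetherian_isArtinian.2 ⟨inferInstance, inferInstance⟩
  let toE (X : ModA R) : (X.M →ₗ[R] Q) →ₗ[K] X.M →ₗ[K] E :=
    { toFun g := ε ∘ₗ g.restrictScalars K
      map_add' g g' := LinearMap.ext fun x => map_add ε (g x) (g' x)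
      map_smul' k g := LinearMap.ext fun x => map_smul ε k (g x) }
  have htoE (X : ModA R) : Function.Injective (toE X) := fun g g' h =>
    LinearMap.ext fun x => hR.ext fun r => by
      simpa [toE] using LinearMap.congr_fun h (r • x)
  refine ⟨hR.injective hE, fun X x hx => ?_, fun X => ?_, fun X Φ => ?_⟩
  · obtain ⟨l, hl⟩ := hE.exists_apply_ne_zero hx
    obtain ⟨g, hg⟩ := hR.exists_apply_eq l
    exact ⟨g, fun h => hl (by rw [← hg, h, map_zero])⟩
  · obtain ⟨_, _⟩ := isFiniteLength_iff_isNoetherian_isArtinian.1 (hE.isFiniteLength_hom (hfin X))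
    exact isFiniteLength_iff_isNoetherian_isArtinian.2
      ⟨isNoetherian_of_tower K (isNoetherian_of_injective _ (htoE X)),
        isArtinian_of_tower K (isArtinian_of_injective _ (htoE X))⟩
  · obtain ⟨l, hl⟩ := hE.exists_comp_eq (htoE X) (ε ∘ₗ Φ.restrictScalars K)
    obtain ⟨x, hx⟩ := hE.exists_eq_apply (hfin X) l
    refine ⟨x, fun g => hS.ext fun s => ?_⟩
    calc ε (s • Φ g)
      _ = ε (Φ (s • g)) := (congrArg ε (map_smul Φ s g)).symm
      _ = l (toE X (s • g)) := (LinearMap.congr_fun hl (s • g)).symm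
      _ = ε (s • g x) := hx _

namespace IsDualityBimodule

variable {R S Q : Type u} [Ring R] [Ring S] [AddCommGroup Q] [Module R Q] [Module S Q]
  [SMulCommClass R S Q] {X Y : ModA R}

theorem ext (h : IsDualityBimodule R S Q) {x y : X.M} (hxy : ∀ g : X.M →ₗ[R] Q, g x = g y) :
    x = y := by
  by_contra hne
  obtain ⟨g, hg⟩ := h.exists_apply_ne_zero X (sub_ne_zero.2 hne)
  exact hg (by rw [map_sub, hxy, sub_self])

/-- The dual `Hom_R(X, Q)` as an object of `mod S`. -/
abbrev dual (h : IsDualityBimodule R S Q) (X : ModA R) : ModA S :=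
  ⟨X.M →ₗ[R] Q, h.isFiniteLength_hom X⟩

/-- The dual of a map, the action of the functor `Hom_R(-, Q)` on morphisms. -/
abbrev dualMap (h : IsDualityBimodule R S Q) (f : X.M →ₗ[R] Y.M) :
    (h.dual Y).M →ₗ[S] (h.dual X).M :=
  f.lcomp S Q

theorem dualMap_injective (h : IsDualityBimodule R S Q) :
    Function.Injective (h.dualMap : (X.M →ₗ[R] Y.M) → _) := fun _ _ hff' =>
  LinearMap.ext fun x => h.ext fun g => LinearMap.congr_fun (LinearMap.congr_fun hff' g) x

theorem exists_apply_apply_eq (h : IsDualityBimodule R S Q) {N : Type*} [AddCommGroup N]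
    [Module R N] (Φ : (X.M →ₗ[R] Q) →ₗ[S] (N →ₗ[R] Q)) :
    ∃ k : N →ₗ[R] X.M, ∀ g n, Φ g n = g (k n) := by
  choose k hk using fun n => h.exists_eq_apply X (LinearMap.applyₗ' S n ∘ₗ Φ)
  simp only [LinearMap.comp_apply, LinearMap.applyₗ'_apply_apply] at hk
  exact
    ⟨{  toFun := k
        map_add' n n' := h.ext fun g => by rw [map_add, ← hk, ← hk, ← hk, map_add]
        map_smul' r n := h.ext fun g => by rw [RingHom.id_apply, map_smul, ← hk, ← hk, map_smul] },
      fun g n => hk n g⟩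

theorem dualMap_surjective (h : IsDualityBimodule R S Q) :
    Function.Surjective (h.dualMap : (X.M →ₗ[R] Y.M) → _) := fun Φ =>
  let ⟨f, hf⟩ := h.exists_apply_apply_eq Φ
  ⟨f, LinearMap.ext fun g => LinearMap.ext fun x => (hf g x).symm⟩

theorem splitMonoMap_dualMap_iff (h : IsDualityBimodule R S Q) {f : X.M →ₗ[R] Y.M} :
    SplitMonoMap (h.dualMap f) ↔ SplitEpiMap f := by
  refine ⟨fun ⟨r, hr⟩ => ?_, fun ⟨s, hs⟩ => ⟨h.dualMap s, congrArg h.dualMap hs⟩⟩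
  obtain ⟨s, rfl⟩ := h.dualMap_surjective r
  exact ⟨s, h.dualMap_injective hr⟩

theorem splitEpiMap_dualMap_iff (h : IsDualityBimodule R S Q) {f : X.M →ₗ[R] Y.M} :
    SplitEpiMap (h.dualMap f) ↔ SplitMonoMap f := by
  refine ⟨fun ⟨s, hs⟩ => ?_, fun ⟨r, hr⟩ => ⟨h.dualMap r, congrArg h.dualMap hr⟩⟩
  obtain ⟨r, rfl⟩ := h.dualMap_surjective s
  exact ⟨r, h.dualMap_injective hs⟩

theorem isIndec_dual (h : IsDualityBimodule R S Q) (hX : X.IsIndec) : (h.dual X).IsIndec := by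
  have := hX.1
  obtain ⟨x, hx⟩ := exists_ne (0 : X.M)
  obtain ⟨g, hg⟩ := h.exists_apply_ne_zero X hx
  refine ⟨⟨g, 0, fun hg0 => hg (hg0 ▸ rfl)⟩, fun Φ hΦ => ?_⟩
  obtain ⟨f, rfl⟩ := h.dualMap_surjective Φ
  refine (hX.2 f (h.dualMap_injective hΦ)).imp (fun hf => ?_) fun hf => ?_
  · rw [hf]; ext; simp
  · rw [hf]; rfl

theorem injective_of_projective_dual (h : IsDualityBimodule R S Q)
    (hproj : Module.Projective S (h.dual X).M) : Module.Injective R X.M := by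
  have := h.injective
  refine ⟨fun M N _ _ _ _ i hi g => ?_⟩
  have hlcomp : Function.Surjective (i.lcomp S Q) := fun φ =>
    Module.Injective.extension_property R _ _ _ i hi φ
  obtain ⟨L, hL⟩ := Module.projective_lifting_property (i.lcomp S Q) (g.lcomp S Q) hlcomp
  obtain ⟨k, hk⟩ := h.exists_apply_apply_eq L
  refine ⟨k, fun m => h.ext fun φ => (hk φ (i m)).symm.trans ?_⟩
  exact LinearMap.congr_fun (LinearMap.congr_fun hL φ) m

/-- The map induced by the duality on the vertices of the Auslander-Reiten quivers. -/
def dualVertex (h : IsDualityBimodule R S Q) : ARVertex R → ARVertex S :=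
  Quotient.map (fun X => ⟨h.dual X.1, h.isIndec_dual X.2⟩) fun _ _ ⟨e⟩ => ⟨e.congrLeft Q S⟩

theorem isInjVertex_of_isProjVertex_dualVertex (h : IsDualityBimodule R S Q) {x : ARVertex R}
    (hx : IsProjVertex (h.dualVertex x)) : IsInjVertex x := by
  obtain ⟨X, rfl⟩ := ARVertex.exists_mk_eq x
  obtain ⟨Y, hY, hproj⟩ := hx
  obtain ⟨e⟩ := ARVertex.mk_eq_mk.1 hY
  exact ⟨X, rfl, h.injective_of_projective_dual (hproj.of_equiv e)⟩

variable [SMulCommClass S R Q]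

/-- Evaluation identifies a module with its double dual. -/
noncomputable def evalEquiv (h : IsDualityBimodule R S Q) (h' : IsDualityBimodule S R Q)
    (X : ModA R) : X.M ≃ₗ[R] (h'.dual (h.dual X)).M :=
  .ofBijective (LinearMap.flip LinearMap.id)
    ⟨fun _ _ hxy => h.ext fun g => LinearMap.congr_fun hxy g, fun Φ =>
      let ⟨x, hx⟩ := h.exists_eq_apply X Φ
      ⟨x, LinearMap.ext fun g => (hx g).symm⟩⟩

theorem isIrred_dualMap (h : IsDualityBimodule R S Q) (h' : IsDualityBimodule S R Q)
    {f : X.M →ₗ[R] Y.M} (hf : IsIrred f) : IsIrred (h.dualMap f) := by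
  refine ⟨mt h.splitMonoMap_dualMap_iff.1 hf.2.1, mt h.splitEpiMap_dualMap_iff.1 hf.1,
    fun Z g k hkg => ?_⟩
  let e := h'.evalEquiv h Z
  obtain ⟨a, ha⟩ := h.dualMap_surjective (X := h'.dual Z) (e.toLinearMap ∘ₗ g)
  obtain ⟨b, hb⟩ := h.dualMap_surjective (Y := h'.dual Z) (k ∘ₗ e.symm.toLinearMap)
  have hab : a ∘ₗ b = f := h.dualMap_injective <| calc
    h.dualMap (a ∘ₗ b) = h.dualMap b ∘ₗ h.dualMap a := rfl
    _ = k ∘ₗ g := by rw [ha, hb]; ext; simp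
    _ = h.dualMap f := hkg
  refine (hf.2.2 _ b a hab).symm.imp (fun ha' => ?_) fun hb' => ?_
  · exact ModA.splitMonoMap_of_comp (ha ▸ h.splitMonoMap_dualMap_iff.2 ha')
  · exact ModA.splitEpiMap_of_comp (hb ▸ h.splitEpiMap_dualMap_iff.2 hb')

theorem dualVertex_dualVertex (h : IsDualityBimodule R S Q) (h' : IsDualityBimodule S R Q)
    (x : ARVertex R) : h'.dualVertex (h.dualVertex x) = x := by
  obtain ⟨X, rfl⟩ := ARVertex.exists_mk_eq x
  exact ARVertex.mk_eq_mk.2 ⟨(h.evalEquiv h' X.1).symm⟩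

theorem arArrow_dualVertex (h : IsDualityBimodule R S Q) (h' : IsDualityBimodule S R Q)
    {x y : ARVertex R} (hxy : ARArrow x y) : ARArrow (h.dualVertex y) (h.dualVertex x) := by
  obtain ⟨X, Y, f, hf, rfl, rfl⟩ := hxy
  exact ⟨⟨h.dual Y.1, _⟩, ⟨h.dual X.1, _⟩, _, h.isIrred_dualMap h' hf, rfl, rfl⟩

theorem onARCycle_dualVertex (h : IsDualityBimodule R S Q) (h' : IsDualityBimodule S R Q)
    {x : ARVertex R} (hx : OnARCycle x) : OnARCycle (h.dualVertex x) :=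
  (Relation.TransGen.swap _ _ hx).lift h.dualVertex fun _ _ => h.arArrow_dualVertex h'

end IsDualityBimodule

theorem exists_isInjVertex_mem (K : Type u) {R : Type u} [CommRing K] [IsArtinianRing K] [Ring R]
    [Algebra K R] [Module.Finite K R] {Γ : Set (ARVertex R)} (hcycle : ∀ x ∈ Γ, OnARCycle x)
    (hclosed : ∀ x ∈ Γ, ∀ y, OnARCycle y → ARStep x y → y ∈ Γ) (hne : Γ.Nonempty)
    (hfin : Γ.Finite) : ∃ x ∈ Γ, IsInjVertex x := by
  obtain ⟨E, _, _, hE⟩ := exists_isDualizing K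
  have h : IsDualityBimodule R Rᵐᵒᵖ (AlgebraDual K R E) :=
    hE.isDualityBimodule AlgebraDual.isCoinduced_evalOne AlgebraDual.isCoinduced_op_evalOne
  have h' : IsDualityBimodule Rᵐᵒᵖ R (AlgebraDual K R E) :=
    hE.isDualityBimodule AlgebraDual.isCoinduced_op_evalOne AlgebraDual.isCoinduced_evalOne
  have hcycle' : ∀ y ∈ h.dualVertex '' Γ, OnARCycle y := by
    rintro _ ⟨x, hx, rfl⟩
    exact h.onARCycle_dualVertex h' (hcycle x hx)
  have hclosed' : ∀ x ∈ h.dualVertex '' Γ, ∀ y, OnARCycle y → ARStep x y →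
      y ∈ h.dualVertex '' Γ := by
    rintro _ ⟨x, hx, rfl⟩ y hy hxy
    have hstep : ARStep x (h'.dualVertex y) := h.dualVertex_dualVertex h' x ▸
      hxy.symm.imp (h'.arArrow_dualVertex h) (h'.arArrow_dualVertex h)
    exact ⟨_, hclosed x hx _ (h'.onARCycle_dualVertex h hy) hstep, h'.dualVertex_dualVertex h y⟩
  obtain ⟨_, ⟨x, hx, rfl⟩, hproj⟩ :=
    exists_isProjVertex_mem K hcycle' hclosed' (hne.image _) (hfin.image _)
  exact ⟨x, hx, h.isInjVertex_of_isProjVertex_dualVertex hproj⟩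

end Duality

theorem finite_cyclic_component_contains_proj_and_inj_general (K : Type u) {R : Type u} [CommRing K]
    [IsArtinianRing K] [Ring R] [Algebra K R] [Module.Finite K R] (Γ : Set (ARVertex R))
    (hΓ : IsCyclicComponent Γ) (hfin : Γ.Finite) :
    (∃ x ∈ Γ, IsProjVertex x) ∧ ∃ x ∈ Γ, IsInjVertex x := by
  obtain ⟨hcycle, hne, hclosed, -⟩ := hΓ
  exact ⟨exists_isProjVertex_mem K hcycle hclosed hne hfin,
    exists_isInjVertex_mem K hcycle hclosed hne hfin⟩

/-- **Corollary.** Let `A` be a basic indecomposable artin algebra and `Γ` a finite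
cyclic component of the Auslander-Reiten quiver `Γ_A`. Then `Γ` contains an
indecomposable projective module and an indecomposable injective module. -/
theorem finite_cyclic_component_contains_proj_and_inj
    (K A : Type u) [CommRing K] [IsArtinianRing K] [Ring A] [Algebra K A]
    [Module.Finite K A] (hbasic : IsBasicAlgebra A) (hconn : IsConnectedAlgebra A)
    (Γ : Set (ARVertex Aᵐᵒᵖ)) (hΓ : IsCyclicComponent Γ) (hfin : Γ.Finite) :
    (∃ x ∈ Γ, IsProjVertex x) ∧ ∃ x ∈ Γ, IsInjVertex x :=
  finite_cyclic_component_contains_proj_and_inj_general K Γ hΓ hfin
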